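/- Let h > 0, P = (a,b) ∈ ℝ²∖{0}, R = √(a²+b²), and fix δ ∈ (0,1). Set c₁ = Rh/(2(h²+R²)^{3/2}) and c₂ = (3h²R²+R⁴)/(8(h²+R²)³). For ε, μ > 0 with εμ < 1, define Γ̂_{εμ}(z) = Γ(z/(εμ)) − ν′(1)|log(εμ)|, h₁(s) = s³ ∫_s^1 r^{−7} ( ∫_0^r (t⁵/(ε²μ²)) ( Γ″(t/(εμ)) − Γ′(t/(εμ))/(t/(εμ)) ) dt ) dr, H₁(z) = h₁(|z|)·Re(z³)/|z|³ (where Γ′, Γ″ are radial derivatives of Γ), ψ_μ(z) = Γ̂_{εμ}(z)(1 + c₁z₁ + c₂|z|²) + (R³/(2h(h²+R²)^{3/2}))·H₁(z), and Ψ_{μ,P}(x) = ψ_μ(A[P]⁻¹(x−P)). Then there exist C > 0 and ε̄ > 0, depending only on ν, γ, h, P, δ, such that for all ε, μ > 0 with εμ < ε̄ there is a continuous function E on the ball {|z| < δ} with sup|E| ≤ C, such that for every y with |y| < δ/(εμ): ε²μ²·(∇·(K∇Ψ_{μ,P}))(P + A[P]·εμy) = Δ_yΓ(y) + ((3Rh²+R³)/(2h(h²+R²)^{3/2}))·εμ·y₁·(Γ(y))₊^γ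 + ε²μ²·E(εμ y). -/

import Mathlib

/-!
The change of variables `x = P + A z` turns `∇·(K∇·)` into `∇·(M∇·)` with
`M(z) = A⁻¹ K(P + A z) A⁻ᵀ`, and `M(0) = I` (`divK_comp`, with the explicit non-divergence form
`opM`). Write `σ = εμ`, `G(z) = Γ(|z|/σ) - ν'(1)|log σ|`, `p = G'/s`, `q = G'' - G'/s`, so that
`ΔG = q + 2p`, and expand `M` and `∇·M` to first order at `z = 0`.

* Applied to `G`, the first-order part of `M` produces terms of size `1/|z|`. The factor
  `1 + c₁ z₀` and the corrector `H = g(|z|) Re z³`, where `ΔH` is `-q(|z|) |z|⁻² Re z³`, cancel them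
  up to `-c₄ z₀ ΔG`, where `c₄ = (3Rh²+R³)/(2h(h²+R²)^{3/2})`.
* The terms containing `G` itself are logarithmic in `|z|`; the factor `c₂|z|²` cancels them at
  the origin, and they are bounded after multiplication by `|z|`.

Everything else is a polynomial in `|z|`, `z/|z|`, `1/(h²+|P+Az|²)` and in the scale-invariant
quantities `|z|²p`, `|z|²q`, `|z|G`, `|z|²g`, `|z|⁴κ` with `κ = g'/|z|` (`remainder`,
`opM_expansion`). All of these are bounded on the unit ball uniformly in `σ`, because
`q, p = O(1/s²)` uniformly (`Profile.scaled`) and `g(s) = ∫ₛ¹ r⁻⁷ ∫₀ʳ t⁵ q` inherits `O(1/s²)`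
(`Scaled.abs_gint_le_two`). This gives the uniform bound on the error `E` (`exists_error`).

Since `-ΔΓ = Γ₊^γ` on the whole plane (`exists_profile`, `Profile.lap2_eq`), the term `-c₄ z₀ ΔG`
is the announced term with `Γ₊^γ`. Finally `E` is continuous since `Γ` and `H` are `C²` on the
plane, including at the origin (`jet_radial`, `jet_corrector`); there one uses that `q` is
continuous with `q(0) = 0`, which for fixed `σ` gives `g = O(|log s|)`.
-/


noncomputable section

open Real

abbrev V2 := EuclideanSpace ℝ (Fin 2)

def mk2 (a b : ℝ) : V2 := (WithLp.equiv 2 (Fin 2 → ℝ)).symm ![a, b]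

def pd (f : V2 → ℝ) (i : Fin 2) (x : V2) : ℝ :=
  fderiv ℝ f x (EuclideanSpace.single i 1)

def lap2 (f : V2 → ℝ) (x : V2) : ℝ :=
  pd (fun y => pd f 0 y) 0 x + pd (fun y => pd f 1 y) 1 x

def Kmat (h : ℝ) (x : V2) : Matrix (Fin 2) (Fin 2) ℝ :=
  (h ^ 2 + x 0 ^ 2 + x 1 ^ 2)⁻¹ •
    !![h ^ 2 + x 1 ^ 2, -(x 0 * x 1); -(x 0 * x 1), h ^ 2 + x 0 ^ 2]

/-- divergence-form operator ∇·(K ∇Ψ). -/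
def divK (h : ℝ) (Ψ : V2 → ℝ) (x : V2) : ℝ :=
  ∑ i, pd (fun y => ∑ j, Kmat h y i j * pd Ψ j y) i x

/-- The radial profile of Γ: ν on [0,1], ν′(1)·log r outside (c = ν′(1)). -/
def GammaRad (ν : ℝ → ℝ) (c : ℝ) (r : ℝ) : ℝ :=
  if r ≤ 1 then ν r else c * Real.log r

/-- The radial first derivative Γ′ of Γ. -/
def GammaRad' (ν' : ℝ → ℝ) (c : ℝ) (r : ℝ) : ℝ :=
  if r ≤ 1 then ν' r else c / r

/-- The radial second derivative Γ″ of Γ. -/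
def GammaRad'' (ν'' : ℝ → ℝ) (c : ℝ) (r : ℝ) : ℝ :=
  if r ≤ 1 then ν'' r else -c / r ^ 2

/-! ### Gradients and second-order jets -/

/-- `f` is differentiable at `z` with gradient `(u, v)`. -/
def HasGrad (f : V2 → ℝ) (u v : ℝ) (z : V2) : Prop :=
  HasFDerivAt f (u • (EuclideanSpace.proj 0 : V2 →L[ℝ] ℝ)
    + v • (EuclideanSpace.proj 1 : V2 →L[ℝ] ℝ)) z

lemma HasGrad.pd0 {f : V2 → ℝ} {u v : ℝ} {z : V2} (hf : HasGrad f u v z) : pd f 0 z = u := by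
  unfold pd
  rw [HasFDerivAt.fderiv hf]
  simp

lemma HasGrad.pd1 {f : V2 → ℝ} {u v : ℝ} {z : V2} (hf : HasGrad f u v z) : pd f 1 z = v := by
  unfold pd
  rw [HasFDerivAt.fderiv hf]
  simp

lemma HasGrad.continuousAt {f : V2 → ℝ} {u v : ℝ} {z : V2} (hf : HasGrad f u v z) :
    ContinuousAt f z := HasFDerivAt.continuousAt hf

lemma HasGrad.congr {f : V2 → ℝ} {u v u' v' : ℝ} {z : V2} (hf : HasGrad f u v z)
    (hu : u = u') (hv : v = v') : HasGrad f u' v' z := by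
  subst hu hv; exact hf

lemma HasGrad.add {f g : V2 → ℝ} {u v u' v' : ℝ} {z : V2} (hf : HasGrad f u v z)
    (hg : HasGrad g u' v' z) : HasGrad (fun x => f x + g x) (u + u') (v + v') z := by
  have := HasFDerivAt.add hf hg
  exact this.congr_fderiv (ContinuousLinearMap.ext fun x => by simp; ring)

lemma HasGrad.mul {f g : V2 → ℝ} {u v u' v' : ℝ} {z : V2} (hf : HasGrad f u v z)
    (hg : HasGrad g u' v' z) :
    HasGrad (fun x => f x * g x) (u * g z + f z * u') (v * g z + f z * v') z := by
  have := HasFDerivAt.mul hf hg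
  exact this.congr_fderiv (ContinuousLinearMap.ext fun x => by simp; ring)

lemma hasGrad_const (c : ℝ) (z : V2) : HasGrad (fun _ => c) 0 0 z := by
  have := hasFDerivAt_const (𝕜 := ℝ) c z
  exact this.congr_fderiv (ContinuousLinearMap.ext fun x => by simp)

lemma hasGrad_x0 (z : V2) : HasGrad (fun x => x 0) 1 0 z := by
  have := (EuclideanSpace.proj 0 : V2 →L[ℝ] ℝ).hasFDerivAt (x := z)
  exact this.congr_fderiv (ContinuousLinearMap.ext fun x => by simp)

lemma hasGrad_x1 (z : V2) : HasGrad (fun x => x 1) 0 1 z := by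
  have := (EuclideanSpace.proj 1 : V2 →L[ℝ] ℝ).hasFDerivAt (x := z)
  exact this.congr_fderiv (ContinuousLinearMap.ext fun x => by simp)

lemma HasGrad.const_mul {f : V2 → ℝ} {u v : ℝ} {z : V2} (c : ℝ) (hf : HasGrad f u v z) :
    HasGrad (fun x => c * f x) (c * u) (c * v) z :=
  ((hasGrad_const c z).mul hf).congr (by ring) (by ring)

lemma HasGrad.sub {f g : V2 → ℝ} {u v u' v' : ℝ} {z : V2} (hf : HasGrad f u v z)
    (hg : HasGrad g u' v' z) : HasGrad (fun x => f x - g x) (u - u') (v - v') z := by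
  have := (hf.add (hg.const_mul (-1))).congr (u' := u - u') (v' := v - v') (by ring) (by ring)
  convert this using 2
  ring

/-- Chain rule for a scalar outer function. -/
lemma HasGrad.scomp {f : V2 → ℝ} {u v : ℝ} {z : V2} (hf : HasGrad f u v z) {φ : ℝ → ℝ} {d : ℝ}
    (hφ : HasDerivAt φ d (f z)) : HasGrad (fun x => φ (f x)) (d * u) (d * v) z := by
  have := hφ.comp_hasFDerivAt z hf
  exact this.congr_fderiv (ContinuousLinearMap.ext fun x => by simp; ring)

lemma HasGrad.inv {f : V2 → ℝ} {u v : ℝ} {z : V2} (hf : HasGrad f u v z) (h0 : f z ≠ 0) :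
    HasGrad (fun x => (f x)⁻¹) (-u * (f z)⁻¹ ^ 2) (-v * (f z)⁻¹ ^ 2) z :=
  (hf.scomp (hasDerivAt_inv h0)).congr (by rw [inv_pow]; ring) (by rw [inv_pow]; ring)

@[simp] lemma mk2_zero (a b : ℝ) : (mk2 a b) 0 = a := rfl

@[simp] lemma mk2_one (a b : ℝ) : (mk2 a b) 1 = b := rfl

lemma mk2_eq (a b : ℝ) :
    mk2 a b = a • (EuclideanSpace.single 0 1 : V2) + b • (EuclideanSpace.single 1 1 : V2) := by
  ext i; fin_cases i <;> simp

/-- Chain rule for an inner map into the plane. -/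
lemma HasGrad.vcomp {f A B : V2 → ℝ} {u v a0 a1 b0 b1 : ℝ} {x : V2}
    (hf : HasGrad f u v (mk2 (A x) (B x))) (hA : HasGrad A a0 a1 x) (hB : HasGrad B b0 b1 x) :
    HasGrad (fun y => f (mk2 (A y) (B y))) (u * a0 + v * b0) (u * a1 + v * b1) x := by
  have h1 := (HasFDerivAt.smul_const hA (EuclideanSpace.single 0 1 : V2)).add
    (HasFDerivAt.smul_const hB (EuclideanSpace.single 1 1 : V2))
  have h2 : HasFDerivAt (fun y => mk2 (A y) (B y)) _ x :=
    h1.congr_of_eventuallyEq (Filter.Eventually.of_forall fun y => by simp [mk2_eq])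
  have h3 := HasFDerivAt.comp (f := fun y => mk2 (A y) (B y)) x hf h2
  exact h3.congr_fderiv (ContinuousLinearMap.ext fun x => by simp; ring)

lemma norm_sq_V2 (z : V2) : ‖z‖ ^ 2 = z 0 ^ 2 + z 1 ^ 2 := by
  rw [EuclideanSpace.norm_sq_eq]; simp

/-- Gradient of a radial function away from the origin; `φ₁ = φ'/r`. -/
lemma hasGrad_radial {φ : ℝ → ℝ} {φ₁ : ℝ} {z : V2} (hz : z ≠ 0)
    (hφ : HasDerivAt φ (‖z‖ * φ₁) ‖z‖) :
    HasGrad (fun x => φ ‖x‖) (φ₁ * z 0) (φ₁ * z 1) z := by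
  have hn : ‖z‖ ≠ 0 := norm_ne_zero_iff.2 hz
  have e : ∀ x : V2, ‖x‖ = √(x 0 * x 0 + x 1 * x 1) := fun x => by
    rw [← sq, ← sq, ← norm_sq_V2, Real.sqrt_sq (norm_nonneg _)]
  have h1 := ((hasGrad_x0 z).mul (hasGrad_x0 z)).add ((hasGrad_x1 z).mul (hasGrad_x1 z))
  have hne : z 0 * z 0 + z 1 * z 1 ≠ 0 := by
    rw [← sq, ← sq, ← norm_sq_V2]; positivity
  have h2 := h1.scomp (Real.hasDerivAt_sqrt hne)
  simp only [← e] at h2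
  exact (h2.scomp hφ).congr (by field_simp; ring) (by field_simp; ring)

/-- At the origin, multiplying a coordinate by a merely continuous function is differentiable. -/
lemma hasGrad_zero_mul_x0 {f : V2 → ℝ} (hf : ContinuousAt f 0) :
    HasGrad (fun x => f x * x 0) (f 0) 0 0 := by
  unfold HasGrad
  rw [hasFDerivAt_iff_isLittleO_nhds_zero]
  have h1 : (fun x : V2 => f x - f 0) =o[nhds 0] (fun _ => (1 : ℝ)) := by
    rw [Asymptotics.isLittleO_one_iff]
    have := hf.tendsto.sub_const (f 0)
    simpa using this
  have h2 : (fun x : V2 => x 0) =O[nhds 0] (fun x => x) :=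
    Asymptotics.IsBigO.of_bound 1 (Filter.Eventually.of_forall fun x => by
      simpa using PiLp.norm_apply_le x 0)
  have := h1.mul_isBigO h2.norm_right
  refine (this.congr (fun x => ?_) (fun x => by simp)).of_norm_right
  simp; ring

lemma hasGrad_zero_mul_x1 {f : V2 → ℝ} (hf : ContinuousAt f 0) :
    HasGrad (fun x => f x * x 1) 0 (f 0) 0 := by
  unfold HasGrad
  rw [hasFDerivAt_iff_isLittleO_nhds_zero]
  have h1 : (fun x : V2 => f x - f 0) =o[nhds 0] (fun _ => (1 : ℝ)) := by
    rw [Asymptotics.isLittleO_one_iff]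
    have := hf.tendsto.sub_const (f 0)
    simpa using this
  have h2 : (fun x : V2 => x 1) =O[nhds 0] (fun x => x) :=
    Asymptotics.IsBigO.of_bound 1 (Filter.Eventually.of_forall fun x => by
      simpa using PiLp.norm_apply_le x 1)
  have := h1.mul_isBigO h2.norm_right
  refine (this.congr (fun x => ?_) (fun x => by simp)).of_norm_right
  simp; ring

/-- `f` is a `C²` function on the plane with the given first and second partial derivatives. -/
structure Jet (f f0 f1 f00 f01 f11 : V2 → ℝ) : Prop where
  d : ∀ z, HasGrad f (f0 z) (f1 z) z
  d0 : ∀ z, HasGrad f0 (f00 z) (f01 z) z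
  d1 : ∀ z, HasGrad f1 (f01 z) (f11 z) z
  c00 : Continuous f00
  c01 : Continuous f01
  c11 : Continuous f11

section jets
variable {f f0 f1 f00 f01 f11 g g0 g1 g00 g01 g11 : V2 → ℝ}

lemma Jet.c (hf : Jet f f0 f1 f00 f01 f11) : Continuous f :=
  continuous_iff_continuousAt.2 fun z => (hf.d z).continuousAt

lemma Jet.c0 (hf : Jet f f0 f1 f00 f01 f11) : Continuous f0 :=
  continuous_iff_continuousAt.2 fun z => (hf.d0 z).continuousAt

lemma Jet.c1 (hf : Jet f f0 f1 f00 f01 f11) : Continuous f1 :=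
  continuous_iff_continuousAt.2 fun z => (hf.d1 z).continuousAt

lemma Jet.add (hf : Jet f f0 f1 f00 f01 f11) (hg : Jet g g0 g1 g00 g01 g11) :
    Jet (fun z => f z + g z) (fun z => f0 z + g0 z) (fun z => f1 z + g1 z)
      (fun z => f00 z + g00 z) (fun z => f01 z + g01 z) (fun z => f11 z + g11 z) :=
  ⟨fun z => (hf.d z).add (hg.d z), fun z => (hf.d0 z).add (hg.d0 z),
    fun z => (hf.d1 z).add (hg.d1 z), hf.c00.add hg.c00, hf.c01.add hg.c01, hf.c11.add hg.c11⟩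

lemma Jet.const_mul (c : ℝ) (hf : Jet f f0 f1 f00 f01 f11) :
    Jet (fun z => c * f z) (fun z => c * f0 z) (fun z => c * f1 z)
      (fun z => c * f00 z) (fun z => c * f01 z) (fun z => c * f11 z) :=
  ⟨fun z => (hf.d z).const_mul c, fun z => (hf.d0 z).const_mul c, fun z => (hf.d1 z).const_mul c,
    hf.c00.const_mul c, hf.c01.const_mul c, hf.c11.const_mul c⟩

lemma Jet.mul (hf : Jet f f0 f1 f00 f01 f11) (hg : Jet g g0 g1 g00 g01 g11) :
    Jet (fun z => f z * g z) (fun z => f0 z * g z + f z * g0 z)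
      (fun z => f1 z * g z + f z * g1 z)
      (fun z => f00 z * g z + 2 * (f0 z * g0 z) + f z * g00 z)
      (fun z => f01 z * g z + f0 z * g1 z + f1 z * g0 z + f z * g01 z)
      (fun z => f11 z * g z + 2 * (f1 z * g1 z) + f z * g11 z) := by
  have := hf.c; have := hf.c0; have := hf.c1; have := hf.c00; have := hf.c01; have := hf.c11
  have := hg.c; have := hg.c0; have := hg.c1; have := hg.c00; have := hg.c01; have := hg.c11
  refine ⟨fun z => (hf.d z).mul (hg.d z),
    fun z => (((hf.d0 z).mul (hg.d z)).add ((hf.d z).mul (hg.d0 z))).congr (by ring) (by ring),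
    fun z => (((hf.d1 z).mul (hg.d z)).add ((hf.d z).mul (hg.d1 z))).congr (by ring) (by ring),
    ?_, ?_, ?_⟩ <;> fun_prop

end jets

/-! ### The operator in the adapted coordinates -/

/-- The denominator `h² + |x|²` of `K` at `x = P + A z`; there `|x|² = (R + α z₀)² + z₁²`. -/
def Dn (h R α : ℝ) (z0 z1 : ℝ) : ℝ := h ^ 2 + (R + α * z0) ^ 2 + z1 ^ 2

lemma Dn_pos {h : ℝ} (hh : 0 < h) (R α z0 z1 : ℝ) : 0 < Dn h R α z0 z1 := by
  unfold Dn; positivity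

/-- The value at `z` of `∇·(M∇ψ)`, where `M(z) = A⁻¹ K(P + A z) A⁻ᵀ`, as a function of the
coordinates of `z` and of the first and second partial derivatives of `ψ` at `z`.
The two last lines are `(∇·M)·∇ψ`. -/
def opM (h R α β z0 z1 u0 u1 u00 u01 u11 : ℝ) : ℝ :=
  β ^ 2 * (h ^ 2 + z1 ^ 2) * (Dn h R α z0 z1)⁻¹ * u00
    + 2 * (-(β * (R + α * z0) * z1 * (Dn h R α z0 z1)⁻¹)) * u01
    + (h ^ 2 + (R + α * z0) ^ 2) * (Dn h R α z0 z1)⁻¹ * u11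
    - β * (R + α * z0) * ((Dn h R α z0 z1)⁻¹ + 2 * h ^ 2 * (Dn h R α z0 z1)⁻¹ ^ 2) * u0
    - z1 * ((Dn h R α z0 z1)⁻¹ + 2 * h ^ 2 * (Dn h R α z0 z1)⁻¹ ^ 2) * u1

/-- Change of variables `x = P + A z` in the divergence-form operator; `(ca, cb) = P/R`. -/
lemma divK_comp {h R α β ca cb : ℝ} (hh : 0 < h) (hc : ca ^ 2 + cb ^ 2 = 1) (hαβ : α * β = 1)
    {f f0 f1 f00 f01 f11 : V2 → ℝ} (hf : Jet f f0 f1 f00 f01 f11) (Ψ : V2 → ℝ)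
    (hΨ : ∀ x : V2, Ψ x = f (mk2 (ca * β * (x 0 - ca * R) + cb * β * (x 1 - cb * R))
      (-cb * (x 0 - ca * R) + ca * (x 1 - cb * R))))
    (x z : V2) (hx0 : x 0 = ca * R + (ca * α * z 0 - cb * z 1))
    (hx1 : x 1 = cb * R + (cb * α * z 0 + ca * z 1)) :
    divK h Ψ x = opM h R α β (z 0) (z 1) (f0 z) (f1 z) (f00 z) (f01 z) (f11 z) := by
  obtain rfl : Ψ = _ := funext hΨ
  set A : V2 → ℝ := fun x => ca * β * (x 0 - ca * R) + cb * β * (x 1 - cb * R) with hA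
  set B : V2 → ℝ := fun x => -cb * (x 0 - ca * R) + ca * (x 1 - cb * R) with hB
  have gA : ∀ x, HasGrad A (ca * β) (cb * β) x := fun x =>
    ((((hasGrad_x0 x).sub (hasGrad_const _ x)).const_mul (ca * β)).add
      (((hasGrad_x1 x).sub (hasGrad_const _ x)).const_mul (cb * β))).congr (by ring) (by ring)
  have gB : ∀ x, HasGrad B (-cb) ca x := fun x =>
    ((((hasGrad_x0 x).sub (hasGrad_const _ x)).const_mul (-cb)).add
      (((hasGrad_x1 x).sub (hasGrad_const _ x)).const_mul ca)).congr (by ring) (by ring)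
  have gΨ : ∀ x, HasGrad (fun y => f (mk2 (A y) (B y))) _ _ x := fun x =>
    (hf.d (mk2 (A x) (B x))).vcomp (gA x) (gB x)
  have hAz : A x = z 0 := by
    simp only [hA, hx0, hx1]
    linear_combination (z 0 * α * β) * hc + z 0 * hαβ
  have hBz : B x = z 1 := by
    simp only [hB, hx0, hx1]
    linear_combination (z 1) * hc
  have hz : mk2 (A x) (B x) = z := by
    ext i; fin_cases i <;> simp [hAz, hBz]
  -- the flux `M∇ψ` in the `z` coordinates
  set iD : V2 → ℝ := fun z => (Dn h R α (z 0) (z 1))⁻¹ with hiD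
  set V0 : V2 → ℝ := fun z => β ^ 2 * (h ^ 2 + z 1 * z 1) * iD z * f0 z
    + (-β) * ((R + α * z 0) * z 1) * iD z * f1 z with hV0
  set V1 : V2 → ℝ := fun z => (-β) * ((R + α * z 0) * z 1) * iD z * f0 z
    + (h ^ 2 + (R + α * z 0) * (R + α * z 0)) * iD z * f1 z with hV1
  have key : ∀ y : V2, (h ^ 2 + y 0 ^ 2 + y 1 ^ 2)⁻¹ = iD (mk2 (A y) (B y)) ∧
      y 0 = ca * (R + α * A y) - cb * B y ∧ y 1 = cb * (R + α * A y) + ca * B y := by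
    intro y
    have e0 : y 0 = ca * (R + α * A y) - cb * B y := by
      simp only [hA, hB]
      linear_combination (-(y 0)) * hc
        - ca * (ca * (y 0 - ca * R) + cb * (y 1 - cb * R)) * hαβ + R * ca * hc
    have e1 : y 1 = cb * (R + α * A y) + ca * B y := by
      simp only [hA, hB]
      linear_combination (-(y 1)) * hc
        - cb * (ca * (y 0 - ca * R) + cb * (y 1 - cb * R)) * hαβ + R * cb * hc
    refine ⟨?_, e0, e1⟩
    simp only [hiD, mk2_zero, mk2_one]
    congr 1
    unfold Dn
    rw [e0, e1]
    generalize A y = s; generalize B y = t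
    linear_combination ((R + α * s) ^ 2 + t ^ 2) * hc
  have F0 : ∀ y : V2, (∑ j, Kmat h y 0 j * pd (fun y => f (mk2 (A y) (B y))) j y)
      = ca * α * V0 (mk2 (A y) (B y)) + (-cb) * V1 (mk2 (A y) (B y)) := by
    intro y
    obtain ⟨k1, k2, k3⟩ := key y
    rw [Fin.sum_univ_two, (gΨ y).pd0, (gΨ y).pd1]
    simp only [Kmat, Matrix.smul_apply, Matrix.of_apply, Matrix.cons_val', Matrix.cons_val_zero,
      Matrix.cons_val_one, Matrix.cons_val_fin_one, smul_eq_mul, k1, hV0, hV1, mk2_zero, mk2_one]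
    rw [k2, k3]
    generalize A y = s at *; generalize B y = t at *
    generalize iD _ = d; generalize f0 _ = p; generalize f1 _ = q
    linear_combination d * (cb * (R + α * s) + ca * t) * (p * β * t - q * (R + α * s)) * hc
      - d * ca * (β * (h ^ 2 + t ^ 2) * p - (R + α * s) * t * q) * hαβ
  have F1 : ∀ y : V2, (∑ j, Kmat h y 1 j * pd (fun y => f (mk2 (A y) (B y))) j y)
      = cb * α * V0 (mk2 (A y) (B y)) + ca * V1 (mk2 (A y) (B y)) := by
    intro y
    obtain ⟨k1, k2, k3⟩ := key y
    rw [Fin.sum_univ_two, (gΨ y).pd0, (gΨ y).pd1]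
    simp only [Kmat, Matrix.smul_apply, Matrix.of_apply, Matrix.cons_val', Matrix.cons_val_zero,
      Matrix.cons_val_one, Matrix.cons_val_fin_one, smul_eq_mul, k1, hV0, hV1, mk2_zero, mk2_one]
    rw [k2, k3]
    generalize A y = s at *; generalize B y = t at *
    generalize iD _ = d; generalize f0 _ = p; generalize f1 _ = q
    linear_combination (-d) * (ca * (R + α * s) - cb * t) * (p * β * t - q * (R + α * s)) * hc
      - d * cb * (β * (h ^ 2 + t ^ 2) * p - (R + α * s) * t * q) * hαβ
  have hD := (Dn_pos hh R α (z 0) (z 1)).ne'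
  have gX : HasGrad (fun z => R + α * z 0) α 0 z :=
    ((hasGrad_const R z).add ((hasGrad_x0 z).const_mul α)).congr (by ring) (by ring)
  have giD : HasGrad iD (-(2 * α * (R + α * z 0)) * iD z ^ 2) (-(2 * z 1) * iD z ^ 2) z := by
    have h1 : HasGrad (fun z => Dn h R α (z 0) (z 1)) (2 * α * (R + α * z 0)) (2 * z 1) z := by
      have := (((hasGrad_const (h ^ 2) z).add (gX.mul gX)).add
        ((hasGrad_x1 z).mul (hasGrad_x1 z))).congr
        (u' := 2 * α * (R + α * z 0)) (v' := 2 * z 1) (by ring) (by ring)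
      convert this using 2
      unfold Dn; ring
    exact h1.inv hD
  have gM11 := (((hasGrad_const (h ^ 2) z).add ((hasGrad_x1 z).mul (hasGrad_x1 z))).const_mul
    (β ^ 2)).mul giD
  have gM12 := ((gX.mul (hasGrad_x1 z)).const_mul (-β)).mul giD
  have gM22 := ((hasGrad_const (h ^ 2) z).add (gX.mul gX)).mul giD
  have gV0 : HasGrad V0 _ _ z := (gM11.mul (hf.d0 z)).add (gM12.mul (hf.d1 z))
  have gV1 : HasGrad V1 _ _ z := (gM12.mul (hf.d0 z)).add (gM22.mul (hf.d1 z))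
  obtain ⟨a0, b0, gV0, ha0⟩ : ∃ a b, HasGrad V0 a b z ∧ a = _ := ⟨_, _, gV0, rfl⟩
  obtain ⟨a1, b1, gV1, hb1⟩ : ∃ a b, HasGrad V1 a b z ∧ b = _ := ⟨_, _, gV1, rfl⟩
  rw [← hz] at gV0 gV1
  have e0 := gV0.vcomp (gA x) (gB x)
  have e1 := gV1.vcomp (gA x) (gB x)
  have d0 := ((e0.const_mul (ca * α)).add (e1.const_mul (-cb))).pd0
  have d1 := ((e0.const_mul (cb * α)).add (e1.const_mul ca)).pd1
  rw [show divK h (fun y => f (mk2 (A y) (B y))) x = _ from Fin.sum_univ_two _]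
  simp only [F0, F1]
  rw [d0, d1]
  have hab : a0 + b1 = opM h R α β (z 0) (z 1) (f0 z) (f1 z) (f00 z) (f01 z) (f11 z) := by
    rw [ha0, hb1]
    unfold opM
    change _ = β ^ 2 * (h ^ 2 + z 1 ^ 2) * iD z * f00 z
      + 2 * (-(β * (R + α * z 0) * z 1 * iD z)) * f01 z
      + (h ^ 2 + (R + α * z 0) ^ 2) * iD z * f11 z
      - β * (R + α * z 0) * (iD z + 2 * h ^ 2 * iD z ^ 2) * f0 z
      - z 1 * (iD z + 2 * h ^ 2 * iD z ^ 2) * f1 z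
    generalize iD z = d
    linear_combination (f0 z * (-2 * β * (h ^ 2 + z 1 ^ 2) * (R + α * z 0) * d ^ 2)
      + f1 z * (-(z 1) * d + 2 * (R + α * z 0) ^ 2 * z 1 * d ^ 2)) * hαβ
  rw [← hab]
  linear_combination (a0 * α * β + b1) * hc + a0 * hαβ

/-! ### The uniform bound on the remainder -/

/-- The remainder as a function of the scale-invariant quantities
`s = |z|`, `t = z/|z|`, `P = s²p`, `X = s⁴χ`, `Γ = sG`, `Y = s²g`, `K = s⁴κ`
and `d = 1/(h²+|P+Az|²)` (in this order in the vector `x`). No negative power of `s` is left, so it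
is bounded on bounded sets. Here `iS = 1/(h²+R²)`, the numbers `m11, m12` are the first-order Taylor
coefficients of the matrix `M`, and `n11, n12, n22` and `n0, n1` are the Taylor remainders of `M`
and `∇·M` divided by `s²` and `s` respectively. -/
def remainder (h R α β iS c₁ c₂ c₃ : ℝ) (x : Fin 9 → ℝ) : ℝ :=
  let s := x 0
  let t0 := x 1
  let t1 := x 2
  let P := x 3
  let X := x 4
  let Γ := x 5
  let Y := x 6
  let K := x 7
  let d := x 8
  let m11 := -2 * R * α * iS
  let m12 := -β * R * iS
  let e0 := α ^ 2 * t0 ^ 2 + t1 ^ 2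
  let e := 2 * R * α * t0 + s * e0
  let n11 := -e0 * d + β ^ 2 * t1 ^ 2 * d + 2 * R * α * t0 * e * d * iS
  let n12 := -β * t1 * (α * t0 * d - R * e * d * iS)
  let n22 := -t1 ^ 2 * d
  let n0 := -β * (α * t0 * (d + 2 * h ^ 2 * d ^ 2) - R * e * d * iS * (1 + 2 * h ^ 2 * (d + iS)))
  let n1 := -t1 * (d + 2 * h ^ 2 * d ^ 2)
  let τ := t0 ^ 3 - 3 * t0 * t1 ^ 2
  let τ0 := 3 * t0 ^ 2 - 3 * t1 ^ 2
  let τ1 := -6 * t0 * t1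
  let L := -(8 * K + X)
  let w0 := c₁ + 2 * c₂ * (s * t0)
  let w1 := 2 * c₂ * (s * t1)
  let ω := c₁ * t0 + c₂ * s
  let r00 := (X * t0 ^ 2 + P) * ω + 2 * P * t0 * w0 + 2 * c₂ * Γ
    + c₃ * (6 * Y * t0 + K * (2 * τ0 * t0 + τ) + L * τ * t0 ^ 2)
  let r01 := X * t0 * t1 * ω + P * t0 * w1 + P * t1 * w0
    + c₃ * (-6 * Y * t1 + K * (τ0 * t1 + τ1 * t0) + L * τ * t0 * t1)
  let r11 := (X * t1 ^ 2 + P) * ω + 2 * P * t1 * w1 + 2 * c₂ * Γ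
    + c₃ * (-6 * Y * t0 + K * (2 * τ1 * t1 + τ) + L * τ * t1 ^ 2)
  n11 * (X * t0 ^ 2 + P) + 2 * n12 * X * t0 * t1 + n22 * (X * t1 ^ 2 + P) + n0 * P * t0
    + n1 * P * t1 + c₂ * (X + 6 * P)
    + (m11 * t0 + s * n11) * r00 + 2 * (m12 * t1 + s * n12) * r01 + (s * n22) * r11
    + (m11 + m12 + s * n0) * (P * t0 * ω + 2 * c₂ * t0 * Γ + c₃ * (Y * τ0 + K * τ * t0))
    + n0 * c₁ * Γ
    + s * n1 * (P * t1 * ω + 2 * c₂ * t1 * Γ + c₃ * (Y * τ1 + K * τ * t1))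

lemma remainder_bdd (h R α β iS c₁ c₂ c₃ B : ℝ) :
    ∃ C, ∀ x : Fin 9 → ℝ, (∀ i, |x i| ≤ B) → |remainder h R α β iS c₁ c₂ c₃ x| ≤ C := by
  have hc : Continuous (remainder h R α β iS c₁ c₂ c₃) := by
    unfold remainder
    fun_prop
  obtain ⟨C, hC⟩ := (isCompact_closedBall (0 : Fin 9 → ℝ) B).exists_bound_of_continuousOn
    hc.continuousOn
  refine ⟨C, fun x hx => hC x ?_⟩
  have hB : 0 ≤ B := (abs_nonneg _).trans (hx 0)
  rw [mem_closedBall_zero_iff, pi_norm_le_iff_of_nonneg hB]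
  exact hx

/-- The two cancellations behind the expansion. The terms of order `1/s` cancel thanks to the choice
of `c₁` and of the corrector (coefficient `c₃`), up to `-c₄ z₀ ΔG`, and the logarithmic term `G`
cancels thanks to the choice of `c₂`; what is left is `remainder`. Here `G, Gᵢ = p zᵢ` and
`Gᵢⱼ = χ zᵢ zⱼ + p δᵢⱼ` are the derivatives of the radial profile, and `g, κ, λ` are the radial
coefficients of the corrector `g · Re z³` and of its derivatives. -/
lemma opM_expansion {h R α β iS c₁ c₂ c₃ c₄ : ℝ} (hh : 0 < h) (hαβ : α * β = 1)
    (hβ : β ^ 2 * h ^ 2 = h ^ 2 + R ^ 2) (hiS : iS * (h ^ 2 + R ^ 2) = 1)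
    (hc₁ : c₁ = R * α * iS / 2) (hc₃ : c₃ = R * iS * (β - α) / 2)
    (hc₄ : c₄ = R * iS * (2 * α + β) / 2) (hc₂ : c₂ = c₁ * c₄ / 2)
    (s t0 t1 G p χ g κ lam : ℝ) (ht : t0 ^ 2 + t1 ^ 2 = 1) (hl : lam * s ^ 2 = -(8 * κ + χ))
    (z0 z1 T T0 T1 w w0 w1 : ℝ) (hz0 : z0 = s * t0) (hz1 : z1 = s * t1)
    (hT : T = z0 ^ 3 - 3 * z0 * z1 ^ 2) (hT0 : T0 = 3 * z0 ^ 2 - 3 * z1 ^ 2)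
    (hT1 : T1 = -6 * z0 * z1) (hw : w = 1 + c₁ * z0 + c₂ * s ^ 2) (hw0 : w0 = c₁ + 2 * c₂ * z0)
    (hw1 : w1 = 2 * c₂ * z1) :
    opM h R α β z0 z1
      (p * z0 * w + G * w0 + c₃ * (g * T0 + κ * T * z0))
      (p * z1 * w + G * w1 + c₃ * (g * T1 + κ * T * z1))
      ((χ * z0 * z0 + p) * w + 2 * (p * z0 * w0) + G * (2 * c₂)
        + c₃ * (g * (6 * z0) + κ * (2 * T0 * z0 + T) + lam * T * z0 * z0))
      (χ * z0 * z1 * w + p * z0 * w1 + p * z1 * w0 + G * 0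
        + c₃ * (g * (-6 * z1) + κ * (T0 * z1 + T1 * z0) + lam * T * z0 * z1))
      ((χ * z1 * z1 + p) * w + 2 * (p * z1 * w1) + G * (2 * c₂)
        + c₃ * (g * (-6 * z0) + κ * (2 * T1 * z1 + T) + lam * T * z1 * z1))
      - (1 - c₄ * z0) * (χ * s ^ 2 + 2 * p)
    = remainder h R α β iS c₁ c₂ c₃
        ![s, t0, t1, s ^ 2 * p, s ^ 4 * χ, s * G, s ^ 2 * g, s ^ 4 * κ,
          (Dn h R α z0 z1)⁻¹] := by
  have hD : (Dn h R α z0 z1)⁻¹ * (h ^ 2 + (R + α * z0) ^ 2 + z1 ^ 2) = 1 :=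
    inv_mul_cancel₀ (Dn_pos hh R α z0 z1).ne'
  have h2 : β * h ^ 2 * iS = α := by
    linear_combination (-(iS * β * h ^ 2)) * hαβ + α * iS * hβ + α * hiS
  simp only [remainder, opM, Matrix.cons_val, ← hz0, ← hz1]
  generalize (Dn h R α z0 z1)⁻¹ = d at *
  generalize he0 : α ^ 2 * t0 ^ 2 + t1 ^ 2 = e0
  generalize he : 2 * R * α * t0 + s * e0 = e
  have hde : d - iS = -s * e * d * iS := by
    subst he he0 hz0 hz1
    linear_combination iS * hD - d * hiS
  generalize hn11 : -e0 * d + β ^ 2 * t1 ^ 2 * d + 2 * R * α * t0 * e * d * iS = n11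
  generalize hn12 : -β * t1 * (α * t0 * d - R * e * d * iS) = n12
  generalize hn22 : -t1 ^ 2 * d = n22
  generalize hn0 : -β * (α * t0 * (d + 2 * h ^ 2 * d ^ 2)
    - R * e * d * iS * (1 + 2 * h ^ 2 * (d + iS))) = n0
  generalize hn1 : -t1 * (d + 2 * h ^ 2 * d ^ 2) = n1
  have M11 : β ^ 2 * (h ^ 2 + z1 ^ 2) * d = 1 + s * (-2 * R * α * iS * t0 + s * n11) := by
    subst hn11 he he0 hz0 hz1
    linear_combination d * hβ + hD - 2 * R * α * s * t0 * hde
  have M12 : -(β * (R + α * z0) * z1 * d) = s * (-β * R * iS * t1 + s * n12) := by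
    subst hn12 hz0 hz1
    linear_combination (-β * s * t1 * R) * hde
  have M22 : (h ^ 2 + (R + α * z0) ^ 2) * d = 1 + s * (s * n22) := by
    subst hn22 hz1
    linear_combination hD
  have D0 : β * (R + α * z0) * (d + 2 * h ^ 2 * d ^ 2)
      = -(-2 * R * α * iS + -β * R * iS + s * n0) := by
    subst hn0 hz0
    linear_combination (β * R * (1 + 2 * h ^ 2 * (d + iS))) * hde + 2 * R * iS * h2
  have D1 : z1 * (d + 2 * h ^ 2 * d ^ 2) = -(s * n1) := by
    subst hn1 hz1; ring
  rw [M11, M12, M22, D0, D1]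
  clear M11 M12 M22 D0 D1 hn11 hn12 hn22 hn0 hn1 hde he he0 hD hβ hiS h2 hαβ
  subst hw hw0 hw1 hT hT0 hT1 hz0 hz1
  generalize hm11 : -2 * R * α * iS = m11 at *
  generalize hm12 : -β * R * iS = m12 at *
  obtain rfl : c₁ = -m11 / 4 := by rw [hc₁, ← hm11]; ring
  obtain rfl : c₃ = m11 / 4 - m12 / 2 := by rw [hc₃, ← hm11, ← hm12]; ring
  obtain rfl : c₄ = -(m11 + m12) / 2 := by rw [hc₄, ← hm11, ← hm12]; ring
  subst hc₂
  linear_combination (χ * s ^ 2 * (1 + -m11 / 4 * (s * t0)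
        + -m11 / 4 * (-(m11 + m12) / 2) / 2 * s ^ 2)
      + 4 * (-m11 / 4 * (-(m11 + m12) / 2) / 2) * (s ^ 2 * p)
      - (m11 / 4 - m12 / 2) * (8 * κ + χ) * ((s * t0) ^ 3 - 3 * (s * t0) * (s * t1) ^ 2)
      + χ * (3 * m11 / 4 + m12 / 2) * (s * t0) * s ^ 2) * ht
    + (m11 / 4 - m12 / 2) * (t0 ^ 3 - 3 * t0 * t1 ^ 2) * (s ^ 3 * (t0 ^ 2 + t1 ^ 2)
      + s ^ 4 * ((m11 * t0 + s * n11) * t0 ^ 2 + 2 * (m12 * t1 + s * n12) * t0 * t1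
        + s * n22 * t1 ^ 2)) * hl

/-! ### Regularity of the radial profile and of the corrector -/

open Filter Topology in
lemma tendsto_norm_zero_right {ω : ℝ → ℝ} (hω : Tendsto ω (𝓝[>] 0) (𝓝 0)) :
    Tendsto (fun z : V2 => ω ‖z‖) (𝓝[≠] 0) (𝓝 0) :=
  hω.comp tendsto_norm_nhdsNE_zero

open Filter Topology in
lemma continuous_of_radial_bound {F : V2 → ℝ} (hF : ∀ z ≠ 0, ContinuousAt F z) (h0 : F 0 = 0)
    {ω : ℝ → ℝ} (hω : Tendsto ω (𝓝[>] 0) (𝓝 0)) (hb : ∀ z ≠ 0, |F z| ≤ ω ‖z‖) :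
    Continuous F := by
  rw [continuous_iff_continuousAt]
  intro z
  by_cases hz : z = 0
  · subst hz
    rw [continuousAt_iff_punctured_nhds, h0]
    refine squeeze_zero_norm' ?_ (tendsto_norm_zero_right hω)
    filter_upwards [self_mem_nhdsWithin] with z hz using hb z hz
  · exact hF z hz

open Filter Topology in
lemma hasGrad_zero_of_bound {F : V2 → ℝ} (h0 : F 0 = 0)
    {ω : ℝ → ℝ} (hω : Tendsto ω (𝓝[>] 0) (𝓝 0)) (hb : ∀ z ≠ 0, |F z| ≤ ω ‖z‖ * ‖z‖) :
    HasGrad F 0 0 0 := by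
  unfold HasGrad
  rw [hasFDerivAt_iff_isLittleO_nhds_zero, Asymptotics.isLittleO_iff]
  intro c hc
  have h1 : ∀ᶠ z in 𝓝[≠] (0 : V2), ω ‖z‖ < c :=
    (tendsto_norm_zero_right hω).eventually_lt_const hc
  rw [eventually_nhdsWithin_iff] at h1
  filter_upwards [h1] with z hz
  by_cases hz0 : z = 0
  · simp [hz0]
  · have := hb z hz0
    have h3 := mul_le_mul_of_nonneg_right (hz hz0).le (norm_nonneg z)
    simpa [h0] using this.trans h3

open Filter Topology in
lemma hasGrad_zero_radial {G : ℝ → ℝ} (hG : HasDerivWithinAt G 0 (Set.Ici 0) 0) :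
    HasGrad (fun z => G ‖z‖) 0 0 0 := by
  unfold HasGrad
  rw [hasFDerivAt_iff_isLittleO_nhds_zero, Asymptotics.isLittleO_iff]
  intro c hc
  rw [hasDerivWithinAt_iff_isLittleO, Asymptotics.isLittleO_iff] at hG
  have hG := hG hc
  have ht : Tendsto (fun z : V2 => ‖z‖) (𝓝 0) (𝓝[Set.Ici 0] 0) :=
    tendsto_nhdsWithin_iff.2 ⟨by simpa using (continuous_norm (E := V2)).tendsto 0,
      Eventually.of_forall fun z => norm_nonneg z⟩
  filter_upwards [ht.eventually hG] with z hz
  simpa using hz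

lemma abs_x0_le (z : V2) : |z 0| ≤ ‖z‖ := by simpa using PiLp.norm_apply_le z 0

lemma abs_x1_le (z : V2) : |z 1| ≤ ‖z‖ := by simpa using PiLp.norm_apply_le z 1

lemma continuousAt_radial {φ : ℝ → ℝ} (hφ : ∀ s > 0, ContinuousAt φ s) {z : V2} (hz : z ≠ 0) :
    ContinuousAt (fun z : V2 => φ ‖z‖) z :=
  ContinuousAt.comp' (hφ _ (norm_pos_iff.2 hz)) continuous_norm.continuousAt

open Filter Topology in
/-- Second-order jet of a radial function `G(|z|)`, where `p = G'/s` and `χ = p'/s`. -/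
lemma jet_radial {G p χ : ℝ → ℝ} (dG : ∀ s > 0, HasDerivAt G (s * p s) s)
    (dG0 : HasDerivWithinAt G 0 (Set.Ici 0) 0)
    (dp : ∀ s > 0, HasDerivAt p (s * χ s) s) (cp : ContinuousWithinAt p (Set.Ici 0) 0)
    (cχ : ∀ s > 0, ContinuousAt χ s) (hχ : Tendsto (fun s => s ^ 2 * χ s) (𝓝[>] 0) (𝓝 0)) :
    Jet (fun z => G ‖z‖) (fun z => p ‖z‖ * z 0) (fun z => p ‖z‖ * z 1)
      (fun z => χ ‖z‖ * z 0 * z 0 + p ‖z‖) (fun z => χ ‖z‖ * z 0 * z 1)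
      (fun z => χ ‖z‖ * z 1 * z 1 + p ‖z‖) := by
  have gp : ∀ z : V2, z ≠ 0 → HasGrad (fun z => p ‖z‖) (χ ‖z‖ * z 0) (χ ‖z‖ * z 1) z :=
    fun z hz => hasGrad_radial hz (dp _ (norm_pos_iff.2 hz))
  have cp0 : ContinuousAt (fun z : V2 => p ‖z‖) 0 := by
    have ht : Tendsto (fun z : V2 => ‖z‖) (𝓝 0) (𝓝[Set.Ici 0] 0) :=
      tendsto_nhdsWithin_iff.2 ⟨by simpa using (continuous_norm (E := V2)).tendsto 0,
        Eventually.of_forall fun z => norm_nonneg z⟩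
    have := Tendsto.comp cp ht
    rw [ContinuousAt, norm_zero]; exact this
  have cpc : Continuous (fun z : V2 => p ‖z‖) := by
    rw [continuous_iff_continuousAt]
    intro z
    by_cases hz : z = 0
    · subst hz; exact cp0
    · exact (gp z hz).continuousAt
  have hω : Tendsto (fun s => |s ^ 2 * χ s|) (𝓝[>] 0) (𝓝 0) := by simpa using hχ.abs
  have hq : ∀ i j : Fin 2, Continuous (fun z : V2 => χ ‖z‖ * z i * z j) := by
    intro i j
    refine continuous_of_radial_bound (fun z hz => ?_) (by simp) hω (fun z hz => ?_)
    · have := continuousAt_radial cχ hz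
      have h1 : ContinuousAt (fun z : V2 => z i) z := by fun_prop
      have h2 : ContinuousAt (fun z : V2 => z j) z := by fun_prop
      exact (this.mul h1).mul h2
    · have hi : |z i| ≤ ‖z‖ := by simpa using PiLp.norm_apply_le z i
      have hj : |z j| ≤ ‖z‖ := by simpa using PiLp.norm_apply_le z j
      rw [abs_mul, abs_mul, abs_mul, abs_pow, abs_norm, mul_assoc, mul_comm (‖z‖ ^ 2), sq]
      gcongr
  refine ⟨fun z => ?_, fun z => ?_, fun z => ?_, (hq 0 0).add cpc, hq 0 1, (hq 1 1).add cpc⟩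
  · by_cases hz : z = 0
    · subst hz; simpa using hasGrad_zero_radial dG0
    · exact hasGrad_radial hz (dG _ (norm_pos_iff.2 hz))
  · by_cases hz : z = 0
    · subst hz; simpa using hasGrad_zero_mul_x0 cp0
    · exact ((gp z hz).mul (hasGrad_x0 z)).congr (by ring) (by ring)
  · by_cases hz : z = 0
    · subst hz; simpa using hasGrad_zero_mul_x1 cp0
    · exact ((gp z hz).mul (hasGrad_x1 z)).congr (by ring) (by ring)

/-- `Re z³` in real coordinates. -/
def T3 (z : V2) : ℝ := z 0 ^ 3 - 3 * z 0 * z 1 ^ 2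

/-- `∂₀ Re z³`. -/
def T30 (z : V2) : ℝ := 3 * z 0 ^ 2 - 3 * z 1 ^ 2

/-- `∂₁ Re z³`. -/
def T31 (z : V2) : ℝ := -6 * z 0 * z 1

lemma T3_abs (z : V2) : |T3 z| ≤ 4 * ‖z‖ ^ 3 := by
  have h0 := abs_x0_le z; have h1 := abs_x1_le z
  unfold T3
  calc |z 0 ^ 3 - 3 * z 0 * z 1 ^ 2| ≤ |z 0 ^ 3| + |3 * z 0 * z 1 ^ 2| := abs_sub _ _
    _ = |z 0| ^ 3 + 3 * |z 0| * |z 1| ^ 2 := by simp [abs_mul, abs_pow]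
    _ ≤ ‖z‖ ^ 3 + 3 * ‖z‖ * ‖z‖ ^ 2 := by gcongr
    _ = _ := by ring

lemma T30_abs (z : V2) : |T30 z| ≤ 6 * ‖z‖ ^ 2 := by
  have h0 := abs_x0_le z; have h1 := abs_x1_le z
  unfold T30
  calc |3 * z 0 ^ 2 - 3 * z 1 ^ 2| ≤ |3 * z 0 ^ 2| + |3 * z 1 ^ 2| := abs_sub _ _
    _ = 3 * |z 0| ^ 2 + 3 * |z 1| ^ 2 := by simp [abs_mul]
    _ ≤ 3 * ‖z‖ ^ 2 + 3 * ‖z‖ ^ 2 := by gcongr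
    _ = _ := by ring

lemma T31_abs (z : V2) : |T31 z| ≤ 6 * ‖z‖ ^ 2 := by
  have h0 := abs_x0_le z; have h1 := abs_x1_le z
  unfold T31
  calc |-6 * z 0 * z 1| = 6 * |z 0| * |z 1| := by simp [abs_mul]
    _ ≤ 6 * ‖z‖ * ‖z‖ := by gcongr
    _ = _ := by ring

lemma hasGrad_T3 (z : V2) : HasGrad T3 (T30 z) (T31 z) z := by
  have h0 := hasGrad_x0 z; have h1 := hasGrad_x1 z
  have := ((h0.mul (h0.mul h0)).sub ((h0.mul (h1.mul h1)).const_mul 3)).congr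
    (u' := T30 z) (v' := T31 z) (by unfold T30; ring) (by unfold T31; ring)
  convert this using 1
  ext z; unfold T3; ring

lemma hasGrad_T30 (z : V2) : HasGrad T30 (6 * z 0) (-6 * z 1) z := by
  have h0 := hasGrad_x0 z; have h1 := hasGrad_x1 z
  have := (((h0.mul h0).const_mul 3).sub ((h1.mul h1).const_mul 3)).congr
    (u' := 6 * z 0) (v' := -6 * z 1) (by ring) (by ring)
  convert this using 1
  ext z; unfold T30; ring

lemma hasGrad_T31 (z : V2) : HasGrad T31 (-6 * z 1) (-6 * z 0) z := by
  have h0 := hasGrad_x0 z; have h1 := hasGrad_x1 z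
  have := ((h0.mul h1).const_mul (-6)).congr
    (u' := -6 * z 1) (v' := -6 * z 0) (by ring) (by ring)
  convert this using 1
  ext z; unfold T31; ring

open Filter Topology in
/-- Second-order jet of the corrector `g(|z|) Re z³`, where `κ = g'/s` and `λ = κ'/s`. The weights
in the three limits are what makes all second derivatives vanish at the origin. -/
lemma jet_corrector {g κ lam : ℝ → ℝ} (dg : ∀ s > 0, HasDerivAt g (s * κ s) s)
    (dκ : ∀ s > 0, HasDerivAt κ (s * lam s) s) (cl : ∀ s > 0, ContinuousAt lam s)
    (hg : Tendsto (fun s => s * g s) (𝓝[>] 0) (𝓝 0))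
    (hκ : Tendsto (fun s => s ^ 3 * κ s) (𝓝[>] 0) (𝓝 0))
    (hl : Tendsto (fun s => s ^ 5 * lam s) (𝓝[>] 0) (𝓝 0)) :
    Jet (fun z => g ‖z‖ * T3 z) (fun z => g ‖z‖ * T30 z + κ ‖z‖ * T3 z * z 0)
      (fun z => g ‖z‖ * T31 z + κ ‖z‖ * T3 z * z 1)
      (fun z => g ‖z‖ * (6 * z 0) + κ ‖z‖ * (2 * T30 z * z 0 + T3 z)
        + lam ‖z‖ * T3 z * z 0 * z 0)
      (fun z => g ‖z‖ * (-6 * z 1) + κ ‖z‖ * (T30 z * z 1 + T31 z * z 0)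
        + lam ‖z‖ * T3 z * z 0 * z 1)
      (fun z => g ‖z‖ * (-6 * z 0) + κ ‖z‖ * (2 * T31 z * z 1 + T3 z)
        + lam ‖z‖ * T3 z * z 1 * z 1) := by
  have gg : ∀ z : V2, z ≠ 0 → HasGrad (fun z => g ‖z‖) (κ ‖z‖ * z 0) (κ ‖z‖ * z 1) z :=
    fun z hz => hasGrad_radial hz (dg _ (norm_pos_iff.2 hz))
  have gκ : ∀ z : V2, z ≠ 0 → HasGrad (fun z => κ ‖z‖) (lam ‖z‖ * z 0) (lam ‖z‖ * z 1) z :=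
    fun z hz => hasGrad_radial hz (dκ _ (norm_pos_iff.2 hz))
  have cT : Continuous T3 := by unfold T3; fun_prop
  have cT0 : Continuous T30 := by unfold T30; fun_prop
  have cT1 : Continuous T31 := by unfold T31; fun_prop
  have hg' : Tendsto (fun s => |s * g s|) (𝓝[>] 0) (𝓝 0) := by simpa using hg.abs
  have hκ' : Tendsto (fun s => |s ^ 3 * κ s|) (𝓝[>] 0) (𝓝 0) := by simpa using hκ.abs
  have hl' : Tendsto (fun s => |s ^ 5 * lam s|) (𝓝[>] 0) (𝓝 0) := by simpa using hl.abs
  have hid : Tendsto (fun s : ℝ => s) (𝓝[>] 0) (𝓝 0) := tendsto_nhdsWithin_of_tendsto_nhds tendsto_id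
  have z30 : T3 0 = 0 := by simp [T3]
  have z300 : T30 0 = 0 := by simp [T30]
  have z310 : T31 0 = 0 := by simp [T31]
  have lim1 : Tendsto (fun s => 4 * s * |s * g s|) (𝓝[>] 0) (𝓝 0) := by
    simpa using (hid.const_mul 4).mul hg'
  have lim2 : Tendsto (fun s => 6 * |s * g s| + 4 * |s ^ 3 * κ s|) (𝓝[>] 0) (𝓝 0) := by
    simpa using (hg'.const_mul 6).add (hκ'.const_mul 4)
  have lim3 : Tendsto (fun s => 6 * |s * g s| + 16 * |s ^ 3 * κ s| + 4 * |s ^ 5 * lam s|)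
      (𝓝[>] 0) (𝓝 0) := by
    simpa using ((hg'.const_mul 6).add (hκ'.const_mul 16)).add (hl'.const_mul 4)
  -- the two kinds of estimates used below: first and second derivatives
  have est1 : ∀ (z : V2) (A C : ℝ), |A| ≤ 6 * ‖z‖ ^ 2 → |C| ≤ ‖z‖ →
      |g ‖z‖ * A + κ ‖z‖ * T3 z * C| ≤ (6 * |‖z‖ * g ‖z‖| + 4 * |‖z‖ ^ 3 * κ ‖z‖|) * ‖z‖ := by
    intro z A C hA hC
    have hT := T3_abs z
    calc |g ‖z‖ * A + κ ‖z‖ * T3 z * C| ≤ |g ‖z‖ * A| + |κ ‖z‖ * T3 z * C| := abs_add_le _ _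
      _ = |g ‖z‖| * |A| + |κ ‖z‖| * |T3 z| * |C| := by simp [abs_mul]
      _ ≤ |g ‖z‖| * (6 * ‖z‖ ^ 2) + |κ ‖z‖| * (4 * ‖z‖ ^ 3) * ‖z‖ := by gcongr
      _ = _ := by simp only [abs_mul, abs_pow, abs_norm]; ring
  have est2 : ∀ (z : V2) (A C D F : ℝ), |A| ≤ 6 * ‖z‖ → |C| ≤ 16 * ‖z‖ ^ 3 → |D| ≤ ‖z‖ →
      |F| ≤ ‖z‖ → |g ‖z‖ * A + κ ‖z‖ * C + lam ‖z‖ * T3 z * D * F| ≤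
        6 * |‖z‖ * g ‖z‖| + 16 * |‖z‖ ^ 3 * κ ‖z‖| + 4 * |‖z‖ ^ 5 * lam ‖z‖| := by
    intro z A C D F hA hC hD hF
    have hT := T3_abs z
    calc |g ‖z‖ * A + κ ‖z‖ * C + lam ‖z‖ * T3 z * D * F|
        ≤ |g ‖z‖ * A| + |κ ‖z‖ * C| + |lam ‖z‖ * T3 z * D * F| := abs_add_three _ _ _
      _ = |g ‖z‖| * |A| + |κ ‖z‖| * |C| + |lam ‖z‖| * |T3 z| * |D| * |F| := by simp [abs_mul]
      _ ≤ |g ‖z‖| * (6 * ‖z‖) + |κ ‖z‖| * (16 * ‖z‖ ^ 3)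
          + |lam ‖z‖| * (4 * ‖z‖ ^ 3) * ‖z‖ * ‖z‖ := by gcongr
      _ = _ := by simp only [abs_mul, abs_pow, abs_norm]; ring
  have cont2 : ∀ (A C D F : V2 → ℝ), Continuous A → Continuous C → Continuous D → Continuous F →
      (∀ z, |A z| ≤ 6 * ‖z‖) → (∀ z, |C z| ≤ 16 * ‖z‖ ^ 3) → (∀ z, |D z| ≤ ‖z‖) →
      (∀ z, |F z| ≤ ‖z‖) →
      Continuous fun z => g ‖z‖ * A z + κ ‖z‖ * C z + lam ‖z‖ * T3 z * D z * F z := by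
    intro A C D F cA cC cD cF hA hC hD hF
    refine continuous_of_radial_bound (fun z hz => ?_) ?_ lim3
      (fun z hz => est2 z _ _ _ _ (hA z) (hC z) (hD z) (hF z))
    · exact (((gg z hz).continuousAt.mul cA.continuousAt).add
        ((gκ z hz).continuousAt.mul cC.continuousAt)).add
        ((((continuousAt_radial cl hz).mul cT.continuousAt).mul cD.continuousAt).mul
          cF.continuousAt)
    · have := hA 0; have := hC 0
      simp_all
  have bC : ∀ (z : V2) (A B : ℝ), |A| ≤ 6 * ‖z‖ ^ 2 → |B| ≤ ‖z‖ → |A * B| ≤ 6 * ‖z‖ ^ 3 := by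
    intro z A B hA hB
    calc |A * B| = |A| * |B| := abs_mul _ _
      _ ≤ 6 * ‖z‖ ^ 2 * ‖z‖ := by gcongr
      _ = _ := by ring
  refine ⟨fun z => ?_, fun z => ?_, fun z => ?_, ?_, ?_, ?_⟩
  · by_cases hz : z = 0
    · subst hz
      simpa [z30, z300, z310] using hasGrad_zero_of_bound (F := fun z => g ‖z‖ * T3 z)
        (by simp [z30]) lim1 (fun z _ => by
          have hT := T3_abs z
          calc |g ‖z‖ * T3 z| = |g ‖z‖| * |T3 z| := abs_mul _ _
            _ ≤ |g ‖z‖| * (4 * ‖z‖ ^ 3) := by gcongr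
            _ = _ := by simp only [abs_mul, abs_norm]; ring)
    · exact ((gg z hz).mul (hasGrad_T3 z)).congr (by ring) (by ring)
  · by_cases hz : z = 0
    · subst hz
      simpa [z30, z300, z310] using hasGrad_zero_of_bound
        (F := fun z => g ‖z‖ * T30 z + κ ‖z‖ * T3 z * z 0)
        (by simp [z300]) lim2 (fun z _ => est1 z _ _ (T30_abs z) (abs_x0_le z))
    · exact (((gg z hz).mul (hasGrad_T30 z)).add
        (((gκ z hz).mul (hasGrad_T3 z)).mul (hasGrad_x0 z))).congr (by ring) (by ring)
  · by_cases hz : z = 0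
    · subst hz
      simpa [z30, z300, z310] using hasGrad_zero_of_bound
        (F := fun z => g ‖z‖ * T31 z + κ ‖z‖ * T3 z * z 1)
        (by simp [z310]) lim2 (fun z _ => est1 z _ _ (T31_abs z) (abs_x1_le z))
    · exact (((gg z hz).mul (hasGrad_T31 z)).add
        (((gκ z hz).mul (hasGrad_T3 z)).mul (hasGrad_x1 z))).congr (by ring) (by ring)
  · refine cont2 (fun z => 6 * z 0) (fun z => 2 * T30 z * z 0 + T3 z) (fun z => z 0)
      (fun z => z 0) (by fun_prop) (by fun_prop) (by fun_prop) (by fun_prop)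
      (fun z => ?_) (fun z => ?_) abs_x0_le abs_x0_le
    · simpa [abs_mul] using abs_x0_le z
    · have h1 := abs_le.1 (bC z _ _ (T30_abs z) (abs_x0_le z)); have h2 := abs_le.1 (T3_abs z)
      rw [abs_le]; constructor <;> linarith
  · refine cont2 (fun z => -6 * z 1) (fun z => T30 z * z 1 + T31 z * z 0) (fun z => z 0)
      (fun z => z 1) (by fun_prop) (by fun_prop) (by fun_prop) (by fun_prop)
      (fun z => ?_) (fun z => ?_) abs_x0_le abs_x1_le
    · simpa [abs_mul] using abs_x1_le z
    · have h1 := abs_le.1 (bC z _ _ (T30_abs z) (abs_x1_le z))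
      have h2 := abs_le.1 (bC z _ _ (T31_abs z) (abs_x0_le z))
      have h3 : 0 ≤ ‖z‖ ^ 3 := by positivity
      rw [abs_le]; constructor <;> linarith
  · refine cont2 (fun z => -6 * z 0) (fun z => 2 * T31 z * z 1 + T3 z) (fun z => z 1)
      (fun z => z 1) (by fun_prop) (by fun_prop) (by fun_prop) (by fun_prop)
      (fun z => ?_) (fun z => ?_) abs_x1_le abs_x1_le
    · simpa [abs_mul] using abs_x0_le z
    · have h1 := abs_le.1 (bC z _ _ (T31_abs z) (abs_x1_le z)); have h2 := abs_le.1 (T3_abs z)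
      rw [abs_le]; constructor <;> linarith

/-! ### The profile `Γ` -/

/-- A radial profile `Γ` together with `p = Γ'/r` and `q = Γ'' - Γ'/r` (extended continuously to
`r = 0`), logarithmic outside the unit ball, with the bounds used later. -/
structure Profile (Γ p q : ℝ → ℝ) (c B : ℝ) : Prop where
  dG : ∀ r > 0, HasDerivAt Γ (r * p r) r
  dG0 : HasDerivWithinAt Γ 0 (Set.Ici 0) 0
  dp : ∀ r > 0, HasDerivAt p (q r / r) r
  cp : ContinuousWithinAt p (Set.Ici 0) 0
  cq : ContinuousOn q (Set.Ici 0)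
  q0 : q 0 = 0
  bq : ∀ r ≥ 0, |q r| ≤ B
  bq2 : ∀ r ≥ 0, r ^ 2 * |q r| ≤ B
  bp2 : ∀ r ≥ 0, r ^ 2 * |p r| ≤ B
  bG : ∀ r ≥ 0, r ≤ 1 → |Γ r| ≤ B
  out : ∀ r > 1, Γ r = c * Real.log r
  bc : |c| ≤ B

lemma hasDerivAt_glue {u u' v v' : ℝ → ℝ}
    (hu : ∀ r ∈ Set.Icc (0 : ℝ) 1, HasDerivWithinAt u (u' r) (Set.Icc 0 1) r)
    (hv : ∀ r ≥ 1, HasDerivAt v (v' r) r) (h1 : u 1 = v 1) (h1' : u' 1 = v' 1)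
    (r : ℝ) (hr : 0 < r) :
    HasDerivAt (fun r => if r ≤ 1 then u r else v r) (if r ≤ 1 then u' r else v' r) r := by
  rcases lt_trichotomy r 1 with h | h | h
  · rw [if_pos h.le]
    refine ((hu r ⟨hr.le, h.le⟩).hasDerivAt (Icc_mem_nhds hr h)).congr_of_eventuallyEq ?_
    filter_upwards [Iio_mem_nhds h] with x hx
    rw [if_pos (le_of_lt hx)]
  · subst h
    rw [if_pos le_rfl]
    have hl : HasDerivWithinAt (fun r => if r ≤ 1 then u r else v r) (u' 1) (Set.Iic 1) 1 := by
      have h2 : HasDerivWithinAt u (u' 1) (Set.Iic 1) 1 :=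
        (hu 1 ⟨by norm_num, le_rfl⟩).mono_of_mem_nhdsWithin
          (Icc_mem_nhdsLE (by norm_num : (0 : ℝ) < 1))
      exact h2.congr (fun x hx => if_pos hx) (if_pos le_rfl)
    have hr : HasDerivWithinAt (fun r => if r ≤ 1 then u r else v r) (u' 1) (Set.Ici 1) 1 := by
      rw [h1']
      refine (hv 1 le_rfl).hasDerivWithinAt.congr (fun x hx => ?_) (by simp [h1])
      by_cases hx1 : x ≤ 1
      · obtain rfl : x = 1 := le_antisymm hx1 hx
        simp [h1]
      · simp [hx1]
    have := hl.union hr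
    rwa [Set.Iic_union_Ici, hasDerivWithinAt_univ] at this
  · rw [if_neg h.not_ge]
    refine (hv r h.le).congr_of_eventuallyEq ?_
    filter_upwards [Ioi_mem_nhds h] with x hx
    rw [if_neg (not_le.2 hx)]

open Filter Topology in
/-- The profile of the theorem satisfies the abstract requirements; the equation at `r = 1` and at
`r = 0` (obtained in the limit from the open interval) makes `Γ` of class `C²`. -/
lemma exists_profile (γ : ℝ) (hγ : 3 < γ) (ν ν' ν'' : ℝ → ℝ)
    (hd1 : ∀ r ∈ Set.Icc (0 : ℝ) 1, HasDerivWithinAt ν (ν' r) (Set.Icc 0 1) r)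
    (hd2 : ∀ r ∈ Set.Icc (0 : ℝ) 1, HasDerivWithinAt ν' (ν'' r) (Set.Icc 0 1) r)
    (hd2c : ContinuousOn ν'' (Set.Icc 0 1))
    (hpos : ∀ r ∈ Set.Ico (0 : ℝ) 1, 0 < ν r)
    (hb : ν 1 = 0) (hd0 : ν' 0 = 0) (hd1' : ν' 1 < 0)
    (hODE : ∀ r ∈ Set.Ioo (0 : ℝ) 1, ν'' r + ν' r / r + ν r ^ γ = 0) :
    ∃ p q : ℝ → ℝ, ∃ B : ℝ, Profile (GammaRad ν (ν' 1)) p q (ν' 1) B ∧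
      (∀ r > 0, q r = GammaRad'' ν'' (ν' 1) r - GammaRad' ν' (ν' 1) r / r) ∧
      (∀ r ≥ 0, q r + 2 * p r = -max (GammaRad ν (ν' 1) r) 0 ^ γ) := by
  set c := ν' 1 with hc
  have h01 : (0 : ℝ) ∈ Set.Icc (0 : ℝ) 1 := ⟨le_rfl, zero_le_one⟩
  have h11 : (1 : ℝ) ∈ Set.Icc (0 : ℝ) 1 := ⟨zero_le_one, le_rfl⟩
  have cν : ContinuousOn ν (Set.Icc 0 1) := fun r hr => (hd1 r hr).continuousWithinAt
  have cν' : ContinuousOn ν' (Set.Icc 0 1) := fun r hr => (hd2 r hr).continuousWithinAt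
  have cpow : ContinuousOn (fun r => ν r ^ γ) (Set.Icc 0 1) :=
    cν.rpow_const fun _ _ => Or.inr (by linarith)
  have hγ0 : (0 : ℝ) ^ γ = 0 := Real.zero_rpow (by linarith)
  have ode1 : ν'' 1 = -c := by
    have hne : (𝓝[Set.Ioo (0 : ℝ) 1] 1).NeBot := by
      rw [← mem_closure_iff_nhdsWithin_neBot, closure_Ioo zero_ne_one]; exact h11
    have hct : ContinuousWithinAt (fun r => ν'' r + ν' r / r + ν r ^ γ) (Set.Ioo 0 1) 1 :=
      ((((hd2c 1 h11).add ((cν' 1 h11).div continuousWithinAt_id one_ne_zero)).add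
        (cpow 1 h11))).mono Set.Ioo_subset_Icc_self
    have h2 : Tendsto (fun r => ν'' r + ν' r / r + ν r ^ γ) (𝓝[Set.Ioo 0 1] 1) (𝓝 0) :=
      tendsto_const_nhds.congr' (by
        filter_upwards [self_mem_nhdsWithin] with r hr using (hODE r hr).symm)
    have := tendsto_nhds_unique hct.tendsto h2
    rw [hb, hγ0] at this
    simp only [div_one] at this
    linarith
  set p : ℝ → ℝ := fun r => if r = 0 then ν'' 0 else GammaRad' ν' c r / r with hp
  set q : ℝ → ℝ := fun r => GammaRad'' ν'' c r - p r with hq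
  have d1 : ∀ r > 0, HasDerivAt (GammaRad ν c) (GammaRad' ν' c r) r := fun r hr =>
    hasDerivAt_glue hd1 (v := fun r => c * Real.log r) (v' := fun r => c / r)
      (fun r hr => by
        have := (Real.hasDerivAt_log (x := r) (by positivity)).const_mul c
        simpa [div_eq_mul_inv] using this) (by simp [hb]) (by simp [hc]) r hr
  have d2 : ∀ r > 0, HasDerivAt (GammaRad' ν' c) (GammaRad'' ν'' c r) r := fun r hr =>
    hasDerivAt_glue hd2 (v := fun r => c / r) (v' := fun r => -c / r ^ 2)
      (fun r hr => by
        have := (hasDerivAt_inv (x := r) (by positivity)).const_mul c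
        simp only [div_eq_mul_inv]
        exact this.congr_deriv (by rw [mul_neg, neg_mul])) (by simp [hc]) (by simp [ode1]) r hr
  have tp : Tendsto (fun r => ν' r / r) (𝓝[>] 0) (𝓝 (ν'' 0)) := by
    have := hasDerivWithinAt_iff_tendsto_slope.1 (hd2 0 h01)
    have h2 := this.mono_left (nhdsWithin_mono 0
      (s := Set.Ioc 0 1) (fun x hx => ⟨⟨hx.1.le, hx.2⟩, hx.1.ne'⟩))
    rw [nhdsWithin_Ioc_eq_nhdsGT zero_lt_one] at h2
    refine h2.congr fun x => ?_
    rw [slope_def_field, hd0]; simp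
  have cp : ContinuousWithinAt p (Set.Ici 0) 0 := by
    rw [← Set.Ioi_union_left, continuousWithinAt_union]
    refine ⟨?_, continuousWithinAt_singleton⟩
    rw [ContinuousWithinAt]
    have : p 0 = ν'' 0 := by simp [hp]
    rw [this]
    refine tp.congr' ?_
    filter_upwards [Ioc_mem_nhdsGT (zero_lt_one (α := ℝ))] with r hr
    simp [hp, hr.1.ne', GammaRad', hr.2]
  have ppos : ∀ r > 0, p r = GammaRad' ν' c r / r := fun r hr => by simp [hp, hr.ne']
  have dp : ∀ r > 0, HasDerivAt p (q r / r) r := by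
    intro r hr
    have := (d2 r hr).div (hasDerivAt_id r) hr.ne'
    have h3 : HasDerivAt (fun r => GammaRad' ν' c r / r) (q r / r) r := by
      refine this.congr_deriv ?_
      simp only [hq, ppos r hr, id]
      field_simp
    refine h3.congr_of_eventuallyEq ?_
    filter_upwards [Ioi_mem_nhds hr] with x hx using ppos x hx
  have cpo : ContinuousOn p (Set.Ici 0) := by
    intro r hr
    rcases eq_or_lt_of_le (show (0 : ℝ) ≤ r from hr) with h | h
    · subst h; exact cp
    · exact (dp r h).continuousAt.continuousWithinAt
  have cG2 : ContinuousOn (GammaRad'' ν'' c) (Set.Ici 0) := by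
    rw [← Set.Icc_union_Ici_eq_Ici (zero_le_one (α := ℝ))]
    refine ContinuousOn.union_of_isClosed ?_ ?_ isClosed_Icc isClosed_Ici
    · exact hd2c.congr fun r hr => by simp [GammaRad'', hr.2]
    · have : ContinuousOn (fun r : ℝ => -c / r ^ 2) (Set.Ici 1) :=
        ContinuousOn.div (by fun_prop) (by fun_prop) fun r hr => by
          have : (1 : ℝ) ≤ r := hr
          positivity
      refine this.congr fun r hr => ?_
      by_cases h : r ≤ 1
      · obtain rfl : r = 1 := le_antisymm h hr
        simp [GammaRad'', ode1]
      · simp [GammaRad'', h]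
  have cq : ContinuousOn q (Set.Ici 0) := cG2.sub cpo
  have q0 : q 0 = 0 := by simp [hq, hp, GammaRad'']
  have cG : ContinuousOn (GammaRad ν c) (Set.Icc 0 1) :=
    cν.congr fun r hr => by simp [GammaRad, hr.2]
  obtain ⟨B1, hB1⟩ := isCompact_Icc.exists_bound_of_continuousOn (cpo.mono
    (Set.Icc_subset_Ici_self : Set.Icc (0 : ℝ) 1 ⊆ _))
  obtain ⟨B2, hB2⟩ := isCompact_Icc.exists_bound_of_continuousOn (cq.mono
    (Set.Icc_subset_Ici_self : Set.Icc (0 : ℝ) 1 ⊆ _))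
  obtain ⟨B3, hB3⟩ := isCompact_Icc.exists_bound_of_continuousOn cG
  have n1 := (norm_nonneg _).trans (hB1 0 h01)
  have n2 := (norm_nonneg _).trans (hB2 0 h01)
  have n3 := (norm_nonneg _).trans (hB3 0 h01)
  have n4 := abs_nonneg c
  have pout : ∀ r > 1, p r = c / r ^ 2 := fun r hr => by
    rw [ppos r (by linarith), GammaRad', if_neg hr.not_ge, div_div, sq]
  have qout : ∀ r > 1, q r = -2 * c / r ^ 2 := fun r hr => by
    simp only [hq]; rw [pout r hr, GammaRad'', if_neg hr.not_ge]; ring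
  refine ⟨p, q, B1 + B2 + B3 + 2 * |c|, ?_, fun r hr => ?_, fun r hr => ?_⟩
  · refine ⟨fun r hr => ?_, ?_, dp, cp, cq, q0, fun r hr => ?_, fun r hr => ?_, fun r hr => ?_,
      fun r hr hr1 => ?_, fun r hr => ?_, by linarith⟩
    · rw [ppos r hr, mul_div_cancel₀ _ hr.ne']; exact d1 r hr
    · have h2 := hd1 0 h01
      rw [hd0] at h2
      have h3 : HasDerivWithinAt ν 0 (Set.Ici 0) 0 :=
        h2.mono_of_mem_nhdsWithin (Icc_mem_nhdsGE zero_lt_one)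
      refine h3.congr_of_eventuallyEq ?_ (by simp [GammaRad])
      filter_upwards [Icc_mem_nhdsGE (zero_lt_one (α := ℝ))] with r hr
      simp [GammaRad, hr.2]
    · by_cases h : r ≤ 1
      · have := hB2 r ⟨hr, h⟩
        rw [Real.norm_eq_abs] at this; linarith
      · rw [qout r (not_le.1 h), abs_div, abs_mul]
        have h1 : (1 : ℝ) ≤ r ^ 2 := by nlinarith
        rw [abs_of_pos (show (0 : ℝ) < r ^ 2 by positivity)]
        have := div_le_self (show 0 ≤ |(-2 : ℝ)| * |c| by positivity) h1
        norm_num at this ⊢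
        linarith
    · by_cases h : r ≤ 1
      · have := hB2 r ⟨hr, h⟩
        rw [Real.norm_eq_abs] at this
        have h1 : r ^ 2 ≤ 1 := pow_le_one₀ hr h
        nlinarith [abs_nonneg (q r)]
      · have hr0 : r ≠ 0 := by rintro rfl; simp at h
        rw [qout r (not_le.1 h), abs_div, abs_mul, abs_of_pos (show (0 : ℝ) < r ^ 2 by positivity),
          mul_div_cancel₀ _ (by positivity)]
        norm_num
        linarith
    · by_cases h : r ≤ 1
      · have := hB1 r ⟨hr, h⟩
        rw [Real.norm_eq_abs] at this
        have h1 : r ^ 2 ≤ 1 := pow_le_one₀ hr h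
        nlinarith [abs_nonneg (p r)]
      · have hr0 : r ≠ 0 := by rintro rfl; simp at h
        rw [pout r (not_le.1 h), abs_div, abs_of_pos (show (0 : ℝ) < r ^ 2 by positivity),
          mul_div_cancel₀ _ (by positivity)]
        linarith
    · have := hB3 r ⟨hr, hr1⟩
      rw [Real.norm_eq_abs] at this; linarith
    · rw [GammaRad, if_neg (not_le.2 hr)]
  · simp only [hq, ppos r hr]
  · have e : q r + 2 * p r = GammaRad'' ν'' c r + p r := by simp only [hq]; ring
    rw [e]
    rcases eq_or_lt_of_le hr with h | h
    · subst h
      have h2 : Tendsto (fun r => ν'' r + ν' r / r + ν r ^ γ) (𝓝[>] 0)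
          (𝓝 (ν'' 0 + ν'' 0 + ν 0 ^ γ)) := by
        have a1 := (hd2c 0 h01).mono_of_mem_nhdsWithin (Icc_mem_nhdsGT zero_lt_one)
        have a2 := (cpow 0 h01).mono_of_mem_nhdsWithin (Icc_mem_nhdsGT zero_lt_one)
        exact (a1.tendsto.add tp).add a2.tendsto
      have h3 : Tendsto (fun r => ν'' r + ν' r / r + ν r ^ γ) (𝓝[>] 0) (𝓝 0) :=
        tendsto_const_nhds.congr' (by
          filter_upwards [Ioo_mem_nhdsGT (zero_lt_one (α := ℝ))] with r hr using (hODE r hr).symm)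
      have := tendsto_nhds_unique h2 h3
      have h4 := hpos 0 ⟨le_rfl, zero_lt_one⟩
      simp only [hp, GammaRad'', GammaRad, zero_le_one, if_true, max_eq_left h4.le]
      linarith
    · rcases lt_trichotomy r 1 with h1 | h1 | h1
      · have h4 := hpos r ⟨hr, h1⟩
        have := hODE r ⟨h, h1⟩
        rw [ppos r h]
        simp only [GammaRad', GammaRad'', GammaRad, h1.le, if_true, max_eq_left h4.le]
        linarith
      · subst h1
        rw [ppos 1 h]
        simp [GammaRad', GammaRad'', GammaRad, ode1, hb, hγ0, hc]
      · rw [pout r h1, GammaRad'', if_neg h1.not_ge, GammaRad, if_neg h1.not_ge,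
          max_eq_right (mul_nonpos_of_nonpos_of_nonneg hd1'.le (Real.log_nonneg h1.le)), hγ0]
        ring

/-! ### The profile at scale `σ` -/

/-- The functions `G, p, q` of the concentrated profile `G(s) = Γ(s/σ) - c|log σ|`, where
`p = G'/s` and `q = G'' - G'/s`. The constant `B` is meant to be uniform in `σ`; `D` is allowed to
blow up as `σ → 0` and only serves to prove that the corrector is `C²` at the origin. -/
structure Scaled (G p q : ℝ → ℝ) (B D : ℝ) : Prop where
  dG : ∀ s > 0, HasDerivAt G (s * p s) s
  dG0 : HasDerivWithinAt G 0 (Set.Ici 0) 0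
  dp : ∀ s > 0, HasDerivAt p (q s / s) s
  cp : ContinuousWithinAt p (Set.Ici 0) 0
  cq : ContinuousOn q (Set.Ici 0)
  q0 : q 0 = 0
  bq : ∀ s ≥ 0, |q s| ≤ D
  bq2 : ∀ s ≥ 0, s ^ 2 * |q s| ≤ B
  bp2 : ∀ s ≥ 0, s ^ 2 * |p s| ≤ B
  bG : ∀ s > 0, s < 1 → s * |G s| ≤ 2 * B

lemma Profile.scaled {Γ p q : ℝ → ℝ} {c B σ : ℝ} (hP : Profile Γ p q c B) (hσ : 0 < σ)
    (hσ1 : σ < 1) :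
    Scaled (fun s => Γ (s / σ) - c * |Real.log σ|) (fun s => p (s / σ) / σ ^ 2)
      (fun s => q (s / σ) / σ ^ 2) B (B / σ ^ 2) := by
  have hdiv : ∀ s : ℝ, HasDerivAt (fun s => s / σ) (1 / σ) s := fun s =>
    (hasDerivAt_id s).div_const σ
  have hmaps : Set.MapsTo (fun s : ℝ => s / σ) (Set.Ici 0) (Set.Ici 0) := fun s hs =>
    div_nonneg hs hσ.le
  have hB : 0 ≤ B := (abs_nonneg c).trans hP.bc
  have hscale : ∀ f : ℝ → ℝ, (∀ r ≥ 0, r ^ 2 * |f r| ≤ B) →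
      ∀ s ≥ 0, s ^ 2 * |f (s / σ) / σ ^ 2| ≤ B := fun f hf s hs => by
    have := hf (s / σ) (by positivity)
    rw [abs_div, abs_of_pos (by positivity : 0 < σ ^ 2)]
    calc _ = (s / σ) ^ 2 * |f (s / σ)| := by field_simp
      _ ≤ B := this
  refine ⟨fun s hs => ?_, ?_, fun s hs => ?_, ?_, ?_, ?_, fun s hs => ?_, hscale q hP.bq2,
    hscale p hP.bp2, fun s hs hs1 => ?_⟩
  · have := ((hP.dG (s / σ) (by positivity)).comp s (hdiv s)).sub_const (c * |Real.log σ|)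
    exact this.congr_deriv (by field_simp)
  · have h0 : HasDerivWithinAt Γ 0 (Set.Ici 0) (0 / σ) := by rw [zero_div]; exact hP.dG0
    have := (h0.comp 0 (hdiv 0).hasDerivWithinAt hmaps).sub_const (c * |Real.log σ|)
    exact this.congr_deriv (by simp)
  · have := ((hP.dp (s / σ) (by positivity)).comp s (hdiv s)).div_const (σ ^ 2)
    exact this.congr_deriv (by field_simp)
  · have h0 : ContinuousWithinAt p (Set.Ici 0) (0 / σ) := by rw [zero_div]; exact hP.cp
    exact (ContinuousWithinAt.comp (f := fun s : ℝ => s / σ) h0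
      (hdiv 0).continuousAt.continuousWithinAt hmaps).div_const _
  · exact (hP.cq.comp (fun s _ => (hdiv s).continuousAt.continuousWithinAt) hmaps).div_const _
  · simp [hP.q0]
  · rw [abs_div, abs_of_pos (by positivity : 0 < σ ^ 2)]
    gcongr
    exact hP.bq _ (by positivity)
  · have hl : |Real.log σ| = -Real.log σ := abs_of_neg (Real.log_neg hσ hσ1)
    rcases le_or_gt s σ with h | h
    · have h1 := hP.bG (s / σ) (by positivity) ((div_le_one hσ).2 h)
      have h2 : σ * |Real.log σ| < 1 := by
        have := Real.abs_log_mul_self_lt σ hσ hσ1.le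
        rwa [abs_mul, abs_of_pos hσ, mul_comm] at this
      have h3 : s * |Real.log σ| ≤ 1 :=
        (mul_le_mul_of_nonneg_right h (abs_nonneg _)).trans h2.le
      have h4 := abs_sub (Γ (s / σ)) (c * |Real.log σ|)
      rw [abs_mul, abs_abs] at h4
      have h5 : |c| * (s * |Real.log σ|) ≤ B * 1 := by
        gcongr; exact hP.bc
      have h6 : s * |Γ (s / σ)| ≤ 1 * B := by gcongr
      nlinarith
    · have h1 : 1 < s / σ := (one_lt_div hσ).2 h
      have h2 : Γ (s / σ) - c * |Real.log σ| = c * Real.log s := by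
        rw [hP.out _ h1, hl, Real.log_div hs.ne' hσ.ne']; ring
      rw [h2, abs_mul]
      have h3 : s * |Real.log s| ≤ 1 := by
        have := Real.abs_log_mul_self_lt s hs hs1.le
        rw [abs_mul, abs_of_pos hs, mul_comm] at this
        exact this.le
      have h5 : |c| * (s * |Real.log s|) ≤ B * 1 := by
        gcongr; exact hP.bc
      linarith

lemma Scaled.continuousAt_q {G p q : ℝ → ℝ} {B D : ℝ} (hS : Scaled G p q B D) {s : ℝ}
    (hs : 0 < s) : ContinuousAt q s :=
  (hS.cq s hs.le).continuousAt (Ici_mem_nhds hs)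

open Filter Topology in
lemma Scaled.tendsto_q {G p q : ℝ → ℝ} {B D : ℝ} (hS : Scaled G p q B D) :
    Tendsto q (𝓝[>] 0) (𝓝 0) := by
  have := (hS.cq 0 Set.self_mem_Ici).mono Set.Ioi_subset_Ici_self
  rw [ContinuousWithinAt, hS.q0] at this
  exact this

lemma Scaled.jet {G p q : ℝ → ℝ} {B D : ℝ} (hS : Scaled G p q B D) :
    Jet (fun z => G ‖z‖) (fun z => p ‖z‖ * z 0) (fun z => p ‖z‖ * z 1)
      (fun z => q ‖z‖ / ‖z‖ ^ 2 * z 0 * z 0 + p ‖z‖) (fun z => q ‖z‖ / ‖z‖ ^ 2 * z 0 * z 1)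
      (fun z => q ‖z‖ / ‖z‖ ^ 2 * z 1 * z 1 + p ‖z‖) := by
  refine jet_radial (χ := fun s => q s / s ^ 2) hS.dG hS.dG0 (fun s hs => ?_) hS.cp
    (fun s hs => ?_) ?_
  · exact (hS.dp s hs).congr_deriv (by field_simp)
  · exact (hS.continuousAt_q hs).div (by fun_prop) (by positivity)
  · refine hS.tendsto_q.congr' ?_
    filter_upwards [self_mem_nhdsWithin] with s hs
    have : s ≠ 0 := ne_of_gt hs
    field_simp

/-! ### The corrector -/

/-- `F(r) = ∫₀^r t⁵ q(t) dt`. -/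
def Fint (q : ℝ → ℝ) (r : ℝ) : ℝ := ∫ t in (0 : ℝ)..r, t ^ 5 * q |t|

/-- The radial factor of the corrector divided by `s³`: `g(s) = ∫ₛ¹ F(r)/r⁷ dr`. -/
def gint (q : ℝ → ℝ) (s : ℝ) : ℝ := ∫ r in s..1, Fint q r / r ^ 7

section corrector

variable {G p q : ℝ → ℝ} {B D : ℝ}

lemma Scaled.continuous_q_abs (hS : Scaled G p q B D) : Continuous fun t : ℝ => q |t| :=
  hS.cq.comp_continuous continuous_abs fun t => abs_nonneg t

lemma Scaled.hasDerivAt_Fint (hS : Scaled G p q B D) (r : ℝ) :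
    HasDerivAt (Fint q) (r ^ 5 * q |r|) r :=
  intervalIntegral.integral_hasDerivAt_right
    (((continuous_pow 5).mul hS.continuous_q_abs).intervalIntegrable _ _)
    (((continuous_pow 5).mul hS.continuous_q_abs).stronglyMeasurableAtFilter _ _)
    ((continuous_pow 5).mul hS.continuous_q_abs).continuousAt

/-- A power bound on the integrand, integrated. -/
lemma abs_Fint_le (n : ℕ) (M : ℝ)
    (hq : ∀ t ≥ 0, |t ^ 5 * q t| ≤ M * t ^ n) {r : ℝ} (hr : 0 ≤ r) :
    |Fint q r| ≤ M * (r ^ (n + 1) / (n + 1)) := by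
  have h1 : ‖Fint q r‖ ≤ ∫ t in (0 : ℝ)..r, M * t ^ n :=
    intervalIntegral.norm_integral_le_of_norm_le hr
      (Filter.Eventually.of_forall fun t ht => by
        rw [abs_of_pos ht.1, Real.norm_eq_abs]; exact hq t ht.1.le)
      ((continuous_const.mul (continuous_pow n)).intervalIntegrable _ _)
  rw [intervalIntegral.integral_const_mul, integral_pow] at h1
  simpa using h1

/-- From `|q| ≤ B/t²`; uniform in the scale. -/
lemma Scaled.abs_Fint_le_four (hS : Scaled G p q B D) {r : ℝ} (hr : 0 ≤ r) :
    |Fint q r| ≤ B / 4 * r ^ 4 := by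
  refine (abs_Fint_le 3 B (fun t ht => ?_) hr).trans_eq (by push_cast; ring)
  rw [abs_mul, abs_of_nonneg (by positivity : 0 ≤ t ^ 5)]
  have := mul_le_mul_of_nonneg_left (hS.bq2 t ht) (by positivity : 0 ≤ t ^ 3)
  calc _ = t ^ 3 * (t ^ 2 * |q t|) := by ring
    _ ≤ _ := this
    _ = _ := by ring

/-- From `|q| ≤ D`; better than the quartic bound near the origin. -/
lemma Scaled.abs_Fint_le_six (hS : Scaled G p q B D) {r : ℝ} (hr : 0 ≤ r) :
    |Fint q r| ≤ D / 6 * r ^ 6 := by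
  refine (abs_Fint_le 5 D (fun t ht => ?_) hr).trans_eq (by push_cast; ring)
  rw [abs_mul, abs_of_nonneg (by positivity : 0 ≤ t ^ 5), mul_comm]
  gcongr
  exact hS.bq t ht

lemma Scaled.continuousOn_integrand (hS : Scaled G p q B D) :
    ContinuousOn (fun r => Fint q r / r ^ 7) (Set.Ioi 0) := fun r hr =>
  ((hS.hasDerivAt_Fint r).continuousAt.div (continuous_pow 7).continuousAt
    (pow_ne_zero _ (ne_of_gt hr))).continuousWithinAt

lemma Scaled.hasDerivAt_gint (hS : Scaled G p q B D) {s : ℝ} (hs : 0 < s) :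
    HasDerivAt (gint q) (s * (-Fint q s / s ^ 8)) s := by
  have hsub : Set.uIcc s 1 ⊆ Set.Ioi 0 := fun r hr =>
    lt_of_lt_of_le (lt_min hs one_pos) hr.1
  refine (intervalIntegral.integral_hasDerivAt_left
    ((hS.continuousOn_integrand.mono hsub).intervalIntegrable)
    (hS.continuousOn_integrand.stronglyMeasurableAtFilter isOpen_Ioi s hs)
    (hS.continuousOn_integrand.continuousAt (Ioi_mem_nhds hs))).congr_deriv ?_
  field_simp

lemma Scaled.hasDerivAt_kappa (hS : Scaled G p q B D) {s : ℝ} (hs : 0 < s) :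
    HasDerivAt (fun s => -Fint q s / s ^ 8) (s * (8 * Fint q s / s ^ 10 - q s / s ^ 4)) s := by
  refine ((hS.hasDerivAt_Fint s).neg.div (hasDerivAt_pow 8 s) (by positivity)).congr_deriv ?_
  rw [abs_of_pos hs, Pi.neg_apply]
  field_simp
  push_cast
  ring

/-- Comparison of `gint` with an explicit primitive `b` of a bound `b'` on its integrand. -/
lemma abs_gint_le {s : ℝ} (hs : 0 < s) (hs1 : s ≤ 1)
    (b b' : ℝ → ℝ) (hb : ∀ r > 0, HasDerivAt b (b' r) r) (hb' : ContinuousOn b' (Set.Ioi 0))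
    (hle : ∀ r > 0, |Fint q r / r ^ 7| ≤ b' r) : |gint q s| ≤ b 1 - b s := by
  have hsub : Set.uIcc s 1 ⊆ Set.Ioi 0 := fun r hr =>
    lt_of_lt_of_le (lt_min hs one_pos) hr.1
  have ib := (hb'.mono hsub).intervalIntegrable (μ := MeasureTheory.volume)
  rw [← intervalIntegral.integral_eq_sub_of_hasDerivAt (fun r hr => hb r (hsub hr)) ib]
  rw [gint, ← Real.norm_eq_abs]
  exact intervalIntegral.norm_integral_le_of_norm_le hs1
    (Filter.Eventually.of_forall fun t ht => hle t (hs.trans ht.1)) ib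

/-- Uniform in the scale, but singular at the origin. -/
lemma Scaled.abs_gint_le_two (hS : Scaled G p q B D) {s : ℝ} (hs : 0 < s) (hs1 : s ≤ 1) :
    s ^ 2 * |gint q s| ≤ B := by
  have hB : 0 ≤ B := by simpa using hS.bq2 0 le_rfl
  have h1 := abs_gint_le hs hs1 (fun r => -(B / 8) * (r ^ 2)⁻¹) (fun r => B / 4 * (r ^ 3)⁻¹)
    (fun r hr => by
      refine (((hasDerivAt_pow 2 r).inv (by positivity)).const_mul (-(B / 8))).congr_deriv ?_
      field_simp
      push_cast
      ring)
    (continuousOn_const.mul ((continuousOn_pow 3).inv₀ fun r hr => pow_ne_zero _ (ne_of_gt hr)))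
    (fun r hr => by
      rw [abs_div, abs_of_pos (by positivity : 0 < r ^ 7), div_le_iff₀ (by positivity)]
      refine (hS.abs_Fint_le_four hr.le).trans_eq ?_
      field_simp)
  have h2 : s ^ 2 * |gint q s| ≤ s ^ 2 * (-(B / 8) * (1 ^ 2)⁻¹ - -(B / 8) * (s ^ 2)⁻¹) := by
    gcongr
  have h3 : s ^ 2 * (-(B / 8) * (1 ^ 2)⁻¹ - -(B / 8) * (s ^ 2)⁻¹) = B / 8 - B / 8 * s ^ 2 := by
    field_simp
    ring
  nlinarith [mul_nonneg hB (sq_nonneg s)]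

/-- Not uniform in the scale, but almost bounded at the origin. -/
lemma Scaled.abs_gint_le_log (hS : Scaled G p q B D) {s : ℝ} (hs : 0 < s) (hs1 : s ≤ 1) :
    |gint q s| ≤ D / 6 * -Real.log s := by
  have h1 := abs_gint_le hs hs1 (fun r => D / 6 * Real.log r) (fun r => D / 6 * r⁻¹)
    (fun r hr => (Real.hasDerivAt_log hr.ne').const_mul _)
    (continuousOn_const.mul (continuousOn_id.inv₀ fun r hr => ne_of_gt hr))
    (fun r hr => by
      rw [abs_div, abs_of_pos (by positivity : 0 < r ^ 7), div_le_iff₀ (by positivity)]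
      refine (hS.abs_Fint_le_six hr.le).trans_eq ?_
      field_simp)
  simp only [Real.log_one] at h1
  linarith

open Filter Topology in
lemma Scaled.tendsto_Fint (hS : Scaled G p q B D) :
    Tendsto (fun s => Fint q s / s ^ 5) (𝓝[>] 0) (𝓝 0) := by
  have h0 : Tendsto (fun s : ℝ => D / 6 * s) (𝓝[>] 0) (𝓝 0) := by
    have : Tendsto (fun s : ℝ => D / 6 * s) (𝓝 0) (𝓝 (D / 6 * 0)) := by
      apply Continuous.tendsto; fun_prop
    rw [mul_zero] at this
    exact this.mono_left nhdsWithin_le_nhds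
  refine squeeze_zero_norm' ?_ h0
  filter_upwards [self_mem_nhdsWithin] with s hs
  have hs : 0 < s := hs
  rw [Real.norm_eq_abs, abs_div, abs_of_pos (by positivity : 0 < s ^ 5),
    div_le_iff₀ (by positivity)]
  exact (hS.abs_Fint_le_six hs.le).trans_eq (by ring)

open Filter Topology in
lemma Scaled.tendsto_gint (hS : Scaled G p q B D) :
    Tendsto (fun s => s * gint q s) (𝓝[>] 0) (𝓝 0) := by
  have h0 : Tendsto (fun s : ℝ => D / 6 * -(s * Real.log s)) (𝓝[>] 0) (𝓝 0) := by
    have : Tendsto (fun s : ℝ => D / 6 * -(s * Real.log s)) (𝓝 0)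
        (𝓝 (D / 6 * -(0 * Real.log 0))) :=
      (continuous_const.mul Real.continuous_mul_log.neg).tendsto 0
    rw [zero_mul, neg_zero, mul_zero] at this
    exact this.mono_left nhdsWithin_le_nhds
  refine squeeze_zero_norm' ?_ h0
  filter_upwards [Ioc_mem_nhdsGT (zero_lt_one (α := ℝ))] with s hs
  rw [Real.norm_eq_abs, abs_mul, abs_of_pos hs.1]
  calc s * |gint q s| ≤ s * (D / 6 * -Real.log s) :=
        mul_le_mul_of_nonneg_left (hS.abs_gint_le_log hs.1 hs.2) hs.1.le
    _ = _ := by ring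

open Filter Topology in
lemma Scaled.jet_gint (hS : Scaled G p q B D) {κ lam : ℝ → ℝ}
    (hκ : κ = fun s => -Fint q s / s ^ 8)
    (hlam : lam = fun s => 8 * Fint q s / s ^ 10 - q s / s ^ 4) :
    Jet (fun z => gint q ‖z‖ * T3 z) (fun z => gint q ‖z‖ * T30 z + κ ‖z‖ * T3 z * z 0)
      (fun z => gint q ‖z‖ * T31 z + κ ‖z‖ * T3 z * z 1)
      (fun z => gint q ‖z‖ * (6 * z 0) + κ ‖z‖ * (2 * T30 z * z 0 + T3 z)
        + lam ‖z‖ * T3 z * z 0 * z 0)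
      (fun z => gint q ‖z‖ * (-6 * z 1) + κ ‖z‖ * (T30 z * z 1 + T31 z * z 0)
        + lam ‖z‖ * T3 z * z 0 * z 1)
      (fun z => gint q ‖z‖ * (-6 * z 0) + κ ‖z‖ * (2 * T31 z * z 1 + T3 z)
        + lam ‖z‖ * T3 z * z 1 * z 1) := by
  subst hκ hlam
  refine jet_corrector (fun s hs => hS.hasDerivAt_gint hs) (fun s hs => hS.hasDerivAt_kappa hs)
    (fun s hs => ?_) hS.tendsto_gint ?_ ?_
  · exact ((continuousAt_const.mul (hS.hasDerivAt_Fint s).continuousAt).div (by fun_prop)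
      (by positivity)).sub ((hS.continuousAt_q hs).div (by fun_prop) (by positivity))
  · have := hS.tendsto_Fint.neg
    rw [neg_zero] at this
    refine this.congr' ?_
    filter_upwards [self_mem_nhdsWithin] with s hs
    have : s ≠ 0 := ne_of_gt hs
    field_simp
  · have h1 : Tendsto (fun s : ℝ => s) (𝓝[>] 0) (𝓝 0) := tendsto_id.mono_left nhdsWithin_le_nhds
    have := (hS.tendsto_Fint.const_mul 8).sub (h1.mul hS.tendsto_q)
    rw [mul_zero, mul_zero, sub_zero] at this
    refine this.congr' ?_
    filter_upwards [self_mem_nhdsWithin] with s hs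
    have : s ≠ 0 := ne_of_gt hs
    field_simp

end corrector

/-! ### The error term -/

lemma jet_weight (c₁ c₂ : ℝ) :
    Jet (fun z => 1 + c₁ * z 0 + c₂ * ‖z‖ ^ 2) (fun z => c₁ + 2 * c₂ * z 0)
      (fun z => 2 * c₂ * z 1) (fun _ => 2 * c₂) (fun _ => 0) (fun _ => 2 * c₂) := by
  refine ⟨fun z => ?_, fun z => ?_, fun z => ?_, continuous_const, continuous_const,
    continuous_const⟩
  · have h0 := hasGrad_x0 z
    have h1 := hasGrad_x1 z
    have := (((hasGrad_const 1 z).add (h0.const_mul c₁)).add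
      (((h0.mul h0).add (h1.mul h1)).const_mul c₂)).congr
      (u' := c₁ + 2 * c₂ * z 0) (v' := 2 * c₂ * z 1) (by ring) (by ring)
    convert this using 2 with x
    rw [norm_sq_V2]; ring
  · exact ((hasGrad_const c₁ z).add ((hasGrad_x0 z).const_mul (2 * c₂))).congr (by ring) (by ring)
  · exact ((hasGrad_x1 z).const_mul (2 * c₂)).congr (by ring) (by ring)

lemma Scaled.continuous_p {G p q : ℝ → ℝ} {B D : ℝ} (hS : Scaled G p q B D) :
    Continuous fun z : V2 => p ‖z‖ := by
  have : ContinuousOn p (Set.Ici 0) := by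
    intro r hr
    rcases eq_or_lt_of_le (show (0 : ℝ) ≤ r from hr) with h | h
    · subst h; exact hS.cp
    · exact (hS.dp r h).continuousAt.continuousWithinAt
  exact this.comp_continuous continuous_norm fun z => norm_nonneg z

lemma Scaled.continuous_q {G p q : ℝ → ℝ} {B D : ℝ} (hS : Scaled G p q B D) :
    Continuous fun z : V2 => q ‖z‖ :=
  hS.cq.comp_continuous continuous_norm fun z => norm_nonneg z

lemma Jet.continuous_opM {h : ℝ} (hh : 0 < h) (R α β : ℝ) {f f0 f1 f00 f01 f11 : V2 → ℝ}
    (hf : Jet f f0 f1 f00 f01 f11) : Continuous fun z : V2 =>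
      opM h R α β (z 0) (z 1) (f0 z) (f1 z) (f00 z) (f01 z) (f11 z) := by
  have := hf.c0; have := hf.c1; have := hf.c00; have := hf.c01; have := hf.c11
  have hD : Continuous fun z : V2 => (Dn h R α (z 0) (z 1))⁻¹ :=
    Continuous.inv₀ (by unfold Dn; fun_prop) fun z => (Dn_pos hh R α (z 0) (z 1)).ne'
  unfold opM
  fun_prop

lemma Dn_inv_le {h : ℝ} (hh : 0 < h) (R α z0 z1 : ℝ) : |(Dn h R α z0 z1)⁻¹| ≤ 1 / h ^ 2 := by
  rw [abs_of_pos (inv_pos.2 (Dn_pos hh R α z0 z1)), ← one_div]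
  refine one_div_le_one_div_of_le (by positivity) ?_
  unfold Dn
  nlinarith [sq_nonneg (R + α * z0), sq_nonneg z1]

/-- The value at the origin, where `z/|z|` is undefined, is recovered by continuity. -/
lemma le_of_punctured_ball {E : V2 → ℝ} (hE : Continuous E) {C : ℝ}
    (hb : ∀ z ≠ 0, ‖z‖ < 1 → |E z| ≤ C) : ∀ z, ‖z‖ < 1 → |E z| ≤ C := by
  intro z hz
  by_cases h0 : z = 0
  · subst h0
    have : (nhdsWithin (0 : V2) {0}ᶜ).NeBot := inferInstance
    refine le_of_tendsto (hE.abs.continuousWithinAt (s := {0}ᶜ)).tendsto ?_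
    filter_upwards [self_mem_nhdsWithin,
      mem_nhdsWithin_of_mem_nhds (Metric.ball_mem_nhds (0 : V2) one_pos)] with z h1 h2
    exact hb z h1 (by simpa using h2)
  · exact hb z h0 hz

/-- The operator applied to `G(1 + c₁z₀ + c₂|z|²) + c₃ H` equals `(1 - c₄ z₀) ΔG` up to an error
bounded by a constant which depends on the profile only through `B`, hence not on its scale. -/
lemma exists_error {h R α β iS c₁ c₂ c₃ c₄ : ℝ} (hh : 0 < h) (hαβ : α * β = 1)
    (hβ : β ^ 2 * h ^ 2 = h ^ 2 + R ^ 2) (hiS : iS * (h ^ 2 + R ^ 2) = 1)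
    (hc₁ : c₁ = R * α * iS / 2) (hc₃ : c₃ = R * iS * (β - α) / 2)
    (hc₄ : c₄ = R * iS * (2 * α + β) / 2) (hc₂ : c₂ = c₁ * c₄ / 2) (B : ℝ) :
    ∃ C > 0, ∀ (G p q : ℝ → ℝ) (D : ℝ), Scaled G p q B D →
      ∃ f0 f1 f00 f01 f11 E : V2 → ℝ,
        Jet (fun z => G ‖z‖ * (1 + c₁ * z 0 + c₂ * ‖z‖ ^ 2) + c₃ * (gint q ‖z‖ * T3 z))
          f0 f1 f00 f01 f11 ∧ Continuous E ∧ (∀ z, ‖z‖ < 1 → |E z| ≤ C) ∧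
        ∀ z, opM h R α β (z 0) (z 1) (f0 z) (f1 z) (f00 z) (f01 z) (f11 z)
          = (1 - c₄ * z 0) * (q ‖z‖ + 2 * p ‖z‖) + E z := by
  obtain ⟨C, hC⟩ := remainder_bdd h R α β iS c₁ c₂ c₃ (1 + 2 * B + 1 / h ^ 2)
  refine ⟨max C 1, by positivity, fun G p q D hS => ?_⟩
  have hB : 0 ≤ B := by simpa using hS.bq2 0 le_rfl
  have hh2 : 0 < 1 / h ^ 2 := by positivity
  have J := (hS.jet.mul (jet_weight c₁ c₂)).add ((hS.jet_gint rfl rfl).const_mul c₃)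
  have hL : Continuous fun z : V2 => (1 - c₄ * z 0) * (q ‖z‖ + 2 * p ‖z‖) :=
    (by fun_prop : Continuous fun z : V2 => 1 - c₄ * z 0).mul
      (hS.continuous_q.add (hS.continuous_p.const_mul 2))
  have hE := (J.continuous_opM hh R α β).sub hL
  refine ⟨_, _, _, _, _, _, J, hE, le_of_punctured_ball hE fun z hz hz1 => ?_,
    fun z => (add_sub_cancel _ _).symm⟩
  have hs : 0 < ‖z‖ := norm_pos_iff.2 hz
  set s := ‖z‖ with hsdef
  have hz0 : z 0 = s * (z 0 / s) := by field_simp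
  have hz1' : z 1 = s * (z 1 / s) := by field_simp
  have ht : (z 0 / s) ^ 2 + (z 1 / s) ^ 2 = 1 := by
    have := norm_sq_V2 z
    rw [← hsdef] at this
    field_simp
    exact this.symm
  have key := opM_expansion hh hαβ hβ hiS hc₁ hc₃ hc₄ hc₂ s (z 0 / s) (z 1 / s) (G s) (p s)
    (q s / s ^ 2) (gint q s) (-Fint q s / s ^ 8) (8 * Fint q s / s ^ 10 - q s / s ^ 4) ht
    (by field_simp; ring) (z 0) (z 1) (T3 z) (T30 z) (T31 z) (1 + c₁ * z 0 + c₂ * s ^ 2)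
    (c₁ + 2 * c₂ * z 0) (2 * c₂ * z 1) hz0 hz1' rfl rfl rfl rfl rfl rfl
  have hq : q s = q s / s ^ 2 * s ^ 2 := by field_simp
  rw [← hq] at key
  refine (le_of_eq (congrArg abs key)).trans ((hC _ ?_).trans (le_max_left C 1))
  have hx0 := abs_x0_le z
  have hx1 := abs_x1_le z
  have b1 : |z 0 / s| ≤ 1 := by rw [abs_div, abs_of_pos hs]; exact (div_le_one hs).2 hx0
  have b2 : |z 1 / s| ≤ 1 := by rw [abs_div, abs_of_pos hs]; exact (div_le_one hs).2 hx1
  have b3 : |s ^ 2 * p s| ≤ B := by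
    rw [abs_mul, abs_of_pos (by positivity : 0 < s ^ 2)]; exact hS.bp2 s hs.le
  have b4 : |s ^ 4 * (q s / s ^ 2)| ≤ B := by
    have e : s ^ 4 * (q s / s ^ 2) = s ^ 2 * q s := by field_simp
    rw [e, abs_mul, abs_of_pos (by positivity : 0 < s ^ 2)]; exact hS.bq2 s hs.le
  have b5 : |s * G s| ≤ 2 * B := by
    rw [abs_mul, abs_of_pos hs]; exact hS.bG s hs hz1
  have b6 : |s ^ 2 * gint q s| ≤ B := by
    rw [abs_mul, abs_of_pos (by positivity : 0 < s ^ 2)]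
    exact hS.abs_gint_le_two hs hz1.le
  have b7 : |s ^ 4 * (-Fint q s / s ^ 8)| ≤ B := by
    have e : s ^ 4 * (-Fint q s / s ^ 8) = -(Fint q s / s ^ 4) := by field_simp
    rw [e, abs_neg, abs_div, abs_of_pos (by positivity : 0 < s ^ 4),
      div_le_iff₀ (by positivity)]
    have := hS.abs_Fint_le_four hs.le
    have h4 : 0 ≤ B * s ^ 4 := by positivity
    linarith
  have b8 := Dn_inv_le hh R α (z 0) (z 1)
  have b0 : |s| ≤ 1 := by rw [abs_of_pos hs]; exact hz1.le
  intro i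
  fin_cases i <;> simp only [Matrix.cons_val, Fin.zero_eta, Fin.mk_one, Fin.reduceFinMk] <;>
    linarith

/-! ### The expansion -/

lemma Profile.lap2_eq {Γ p q : ℝ → ℝ} {c B : ℝ} (hP : Profile Γ p q c B) (y : V2) :
    lap2 (fun y => Γ ‖y‖) y = q ‖y‖ + 2 * p ‖y‖ := by
  have hc : ∀ s > 0, ContinuousAt (fun s => q s / s ^ 2) s := fun s hs =>
    ((hP.cq s hs.le).continuousAt (Ici_mem_nhds hs)).div (by fun_prop) (by positivity)
  have hq : Filter.Tendsto (fun s => s ^ 2 * (q s / s ^ 2)) (nhdsWithin 0 (Set.Ioi 0))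
      (nhds 0) := by
    have := (hP.cq 0 Set.self_mem_Ici).mono Set.Ioi_subset_Ici_self
    rw [ContinuousWithinAt, hP.q0] at this
    refine this.congr' ?_
    filter_upwards [self_mem_nhdsWithin] with s hs
    have : s ≠ 0 := ne_of_gt hs
    field_simp
  have J := jet_radial hP.dG hP.dG0
    (fun s hs => (hP.dp s hs).congr_deriv (by field_simp)) hP.cp hc hq
  unfold lap2
  have e0 : (fun y => pd (fun y : V2 => Γ ‖y‖) 0 y) = fun z => p ‖z‖ * z 0 :=
    funext fun z => (J.d z).pd0
  have e1 : (fun y => pd (fun y : V2 => Γ ‖y‖) 1 y) = fun z => p ‖z‖ * z 1 :=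
    funext fun z => (J.d z).pd1
  rw [e0, e1, (J.d0 y).pd0, (J.d1 y).pd1]
  by_cases hy : y = 0
  · subst hy; simp [hP.q0]; ring
  · have hn : ‖y‖ ≠ 0 := norm_ne_zero_iff.2 hy
    have hsq := norm_sq_V2 y
    field_simp
    rw [hsq]; ring

lemma re_cube (z : V2) : (((z 0 : ℂ) + (z 1 : ℂ) * Complex.I) ^ 3).re = T3 z := by
  unfold T3
  simp [pow_succ, Complex.add_re, Complex.mul_re, Complex.mul_im]
  ring

lemma rpow_three_halves {x : ℝ} (hx : 0 ≤ x) : x ^ ((3 : ℝ) / 2) = √x ^ 3 := by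
  rw [Real.sqrt_eq_rpow, ← Real.rpow_natCast, ← Real.rpow_mul hx]
  norm_num

/-- Error expansion for the local approximate stream function Ψ_{μ,P}
built from the regularised profile Γ̂_{εμ} and the corrector H₁: in the rescaled
variable y = z/(εμ), one has ε²μ²L_x(Ψ_{μ,P}) = Δ_yΓ(y) + c·εμ·y₁·Γ(y)₊^γ + ε²μ²E(εμy)
in the region |y| < δ/(εμ), with E uniformly bounded. -/
theorem local_approximate_stream_function
    (γ : ℝ) (hγ : 3 < γ) (ν ν' ν'' : ℝ → ℝ)
    (hd1 : ∀ r ∈ Set.Icc (0 : ℝ) 1, HasDerivWithinAt ν (ν' r) (Set.Icc 0 1) r)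
    (hd2 : ∀ r ∈ Set.Icc (0 : ℝ) 1, HasDerivWithinAt ν' (ν'' r) (Set.Icc 0 1) r)
    (hd2c : ContinuousOn ν'' (Set.Icc 0 1))
    (hpos : ∀ r ∈ Set.Ico (0 : ℝ) 1, 0 < ν r)
    (hb : ν 1 = 0) (hd0 : ν' 0 = 0) (hd1' : ν' 1 < 0)
    (hODE : ∀ r ∈ Set.Ioo (0 : ℝ) 1, ν'' r + ν' r / r + ν r ^ γ = 0)
    (h a b : ℝ) (hh : 0 < h) (hab : ¬(a = 0 ∧ b = 0))
    (R : ℝ) (hR : R = Real.sqrt (a ^ 2 + b ^ 2))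
    (δ : ℝ) (hδ : δ ∈ Set.Ioo (0 : ℝ) 1)
    (c₁ c₂ : ℝ)
    (hc₁ : c₁ = R * h / (2 * (h ^ 2 + R ^ 2) ^ ((3 : ℝ) / 2)))
    (hc₂ : c₂ = (3 * h ^ 2 * R ^ 2 + R ^ 4) / (8 * (h ^ 2 + R ^ 2) ^ 3))
    (P : V2) (hP : P = mk2 a b)
    (Ainv : V2 → V2)
    (hAinv : Ainv = fun z => mk2
      (a * Real.sqrt (h ^ 2 + R ^ 2) / (R * h) * z 0
        + b * Real.sqrt (h ^ 2 + R ^ 2) / (R * h) * z 1)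
      (-(b / R) * z 0 + a / R * z 1))
    (Γhat : ℝ → ℝ → V2 → ℝ)
    (hΓhat : Γhat = fun ε μ z =>
      GammaRad ν (ν' 1) (‖z‖ / (ε * μ)) - ν' 1 * |Real.log (ε * μ)|)
    (h₁ : ℝ → ℝ → ℝ → ℝ)
    (hh₁ : h₁ = fun ε μ s => s ^ 3 * ∫ r in s..1,
      (∫ t in (0 : ℝ)..r, t ^ 5 / (ε ^ 2 * μ ^ 2) *
        (GammaRad'' ν'' (ν' 1) (t / (ε * μ))
          - GammaRad' ν' (ν' 1) (t / (ε * μ)) / (t / (ε * μ)))) / r ^ 7)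
    (H₁ : ℝ → ℝ → V2 → ℝ)
    (hH₁ : H₁ = fun ε μ z =>
      h₁ ε μ ‖z‖ * (((z 0 : ℂ) + (z 1 : ℂ) * Complex.I) ^ 3).re / ‖z‖ ^ 3)
    (ψμ : ℝ → ℝ → V2 → ℝ)
    (hψμ : ψμ = fun ε μ z =>
      Γhat ε μ z * (1 + c₁ * z 0 + c₂ * ‖z‖ ^ 2)
        + R ^ 3 / (2 * h * (h ^ 2 + R ^ 2) ^ ((3 : ℝ) / 2)) * H₁ ε μ z)
    (Ψ : ℝ → ℝ → V2 → ℝ)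
    (hΨ : Ψ = fun ε μ x => ψμ ε μ (Ainv (x - P))) :
    ∃ C > 0, ∃ εbar > 0, ∀ ε μ : ℝ, 0 < ε → 0 < μ → ε * μ < εbar →
      ∃ E : V2 → ℝ, ContinuousOn E (Metric.ball 0 δ)
        ∧ (∀ z ∈ Metric.ball (0 : V2) δ, |E z| ≤ C)
        ∧ ∀ y : V2, ‖y‖ < δ / (ε * μ) →
            ε ^ 2 * μ ^ 2 * divK h (Ψ ε μ) (P + (ε * μ) •
              mk2 (a * h / (R * Real.sqrt (h ^ 2 + R ^ 2)) * y 0 - b / R * y 1)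
                  (b * h / (R * Real.sqrt (h ^ 2 + R ^ 2)) * y 0 + a / R * y 1))
            = lap2 (fun y' => GammaRad ν (ν' 1) ‖y'‖) y
              + (3 * R * h ^ 2 + R ^ 3) / (2 * h * (h ^ 2 + R ^ 2) ^ ((3 : ℝ) / 2))
                * (ε * μ) * y 0 * max (GammaRad ν (ν' 1) ‖y‖) 0 ^ γ
              + ε ^ 2 * μ ^ 2 * E ((ε * μ) • y) := by
  obtain ⟨p, q, B, hP', hq, hode⟩ := exists_profile γ hγ ν ν' ν'' hd1 hd2 hd2c hpos hb hd0 hd1' hODE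
  have hab2 : 0 < a ^ 2 + b ^ 2 := by
    by_contra hcon
    exact hab ⟨by nlinarith [sq_nonneg a, sq_nonneg b], by nlinarith [sq_nonneg a, sq_nonneg b]⟩
  have hR0 : 0 < R := hR ▸ Real.sqrt_pos.2 hab2
  have hR2 : R ^ 2 = a ^ 2 + b ^ 2 := by rw [hR, Real.sq_sqrt hab2.le]
  have hX : 0 < h ^ 2 + R ^ 2 := by positivity
  rw [rpow_three_halves hX.le] at hc₁ hψμ ⊢
  obtain ⟨S, hSdef⟩ : ∃ S, S = √(h ^ 2 + R ^ 2) := ⟨_, rfl⟩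
  have hS0 : 0 < S := hSdef ▸ Real.sqrt_pos.2 hX
  have hS2 : S ^ 2 = h ^ 2 + R ^ 2 := by rw [hSdef, Real.sq_sqrt hX.le]
  rw [← hSdef] at hc₁ hψμ hAinv ⊢
  have hRS : R ^ 2 = S ^ 2 - h ^ 2 := by linarith
  have hca : (a / R) ^ 2 + (b / R) ^ 2 = 1 := by
    field_simp; exact hR2.symm
  have hc₃ : R ^ 3 / (2 * h * S ^ 3) = R * (1 / S ^ 2) * (S / h - h / S) / 2 := by
    rw [show R ^ 3 = R * R ^ 2 by ring, hRS]; field_simp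
  have hc₄ : (3 * R * h ^ 2 + R ^ 3) / (2 * h * S ^ 3)
      = R * (1 / S ^ 2) * (2 * (h / S) + S / h) / 2 := by
    rw [show R ^ 3 = R * R ^ 2 by ring, hRS]; field_simp; ring
  have hc₁' : c₁ = R * (h / S) * (1 / S ^ 2) / 2 := by rw [hc₁]; field_simp
  have hc₂' : c₂ = c₁ * ((3 * R * h ^ 2 + R ^ 3) / (2 * h * S ^ 3)) / 2 := by
    rw [hc₂, hc₁, ← hS2]; field_simp; ring
  have hαβ : h / S * (S / h) = 1 := by field_simp
  obtain ⟨C, hC, hmain⟩ := exists_error (R := R) (α := h / S) (β := S / h) (iS := 1 / S ^ 2)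
    hh hαβ (by rw [← hS2]; field_simp) (by rw [← hS2]; field_simp) hc₁' hc₃ hc₄ hc₂' B
  refine ⟨C, hC, 1, one_pos, fun ε μ hε hμ hlt => ?_⟩
  have hσ : 0 < ε * μ := mul_pos hε hμ
  have hσ2 : ε ^ 2 * μ ^ 2 = (ε * μ) ^ 2 := by ring
  obtain ⟨f0, f1, f00, f01, f11, E, J, cE, bE, hop⟩ := hmain _ _ _ _ (hP'.scaled hσ hlt)
  refine ⟨E, cE.continuousOn, fun z hz => bE z ?_, fun y hy => ?_⟩
  · rw [mem_ball_zero_iff] at hz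
    exact hz.trans hδ.2
  -- the corrector of the theorem is the one built from `gint`
  have hH : ∀ z, H₁ ε μ z = gint (fun s => q (s / (ε * μ)) / (ε * μ) ^ 2) ‖z‖ * T3 z := by
    intro z
    by_cases hz : z = 0
    · subst hz; simp [hH₁, T3]
    have hn : 0 < ‖z‖ := norm_pos_iff.2 hz
    have hF : ∀ r ≥ 0, (∫ t in (0 : ℝ)..r, t ^ 5 / (ε ^ 2 * μ ^ 2) *
        (GammaRad'' ν'' (ν' 1) (t / (ε * μ))
          - GammaRad' ν' (ν' 1) (t / (ε * μ)) / (t / (ε * μ))))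
        = Fint (fun s => q (s / (ε * μ)) / (ε * μ) ^ 2) r := by
      intro r hr
      refine intervalIntegral.integral_congr fun t ht => ?_
      rw [Set.uIcc_of_le hr] at ht
      simp only
      rcases eq_or_lt_of_le ht.1 with h0 | h0
      · subst h0; simp
      · rw [← hq _ (by positivity), abs_of_pos h0]
        field_simp
    have hg : (∫ r in ‖z‖..1, (∫ t in (0 : ℝ)..r, t ^ 5 / (ε ^ 2 * μ ^ 2) *
        (GammaRad'' ν'' (ν' 1) (t / (ε * μ))
          - GammaRad' ν' (ν' 1) (t / (ε * μ)) / (t / (ε * μ)))) / r ^ 7)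
        = gint (fun s => q (s / (ε * μ)) / (ε * μ) ^ 2) ‖z‖ := by
      refine intervalIntegral.integral_congr fun r hr => ?_
      have hr0 : 0 ≤ r := (le_min hn.le zero_le_one).trans hr.1
      rw [hF r hr0]
    simp only [hH₁, hh₁]
    rw [hg, re_cube]
    field_simp
  have hψ : ψμ ε μ = fun z => (GammaRad ν (ν' 1) (‖z‖ / (ε * μ)) - ν' 1 * |Real.log (ε * μ)|)
      * (1 + c₁ * z 0 + c₂ * ‖z‖ ^ 2)
      + R ^ 3 / (2 * h * S ^ 3)
        * (gint (fun s => q (s / (ε * μ)) / (ε * μ) ^ 2) ‖z‖ * T3 z) := by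
    funext z
    simp only [hψμ, hΓhat, hH]
  have hdiv := divK_comp hh hca hαβ J (Ψ ε μ)
    (fun x => by
      simp only [hΨ, hψ, hAinv, hP]
      have e : mk2 (a * S / (R * h) * (x - mk2 a b) 0 + b * S / (R * h) * (x - mk2 a b) 1)
          (-(b / R) * (x - mk2 a b) 0 + a / R * (x - mk2 a b) 1)
          = mk2 (a / R * (S / h) * (x 0 - a / R * R) + b / R * (S / h) * (x 1 - b / R * R))
            (-(b / R) * (x 0 - a / R * R) + a / R * (x 1 - b / R * R)) := by
        congr 1
        · simp; field_simp
        · simp; field_simp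
      rw [e])
    (P + (ε * μ) • mk2 (a * h / (R * S) * y 0 - b / R * y 1) (b * h / (R * S) * y 0 + a / R * y 1))
    ((ε * μ) • y)
    (by simp [hP]; field_simp) (by simp [hP]; field_simp)
  have hny : ‖(ε * μ) • y‖ / (ε * μ) = ‖y‖ := by
    rw [norm_smul, Real.norm_eq_abs, abs_of_pos hσ]; field_simp
  have hode' := hode ‖y‖ (norm_nonneg y)
  rw [hdiv, hop, hP'.lap2_eq, hny, hσ2, ← neg_eq_iff_eq_neg.2 hode']
  have e0 : ((ε * μ) • y) 0 = ε * μ * y 0 := by simp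
  rw [e0]
  field_simp
  ring
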